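/- The multivariable Askey–Wilson (q-Selberg) integral evaluation for the D_N weight: (1/(2^{N−1} N!)) ∮_{T^N} ∏_{1≤i<j≤N} ((x_i^{±1}x_j^{±1};q)_∞/(t x_i^{±1}x_j^{±1};q)_∞) ∏_j dx_j/(2πi x_j) · (q;q)_∞^N/(t;q)_∞^N = ((q t^{N−1};q)_∞/(t^N;q)_∞) · ∏_{j=0}^{N−2} (q t^{2j+1};q)_∞/(t^{2j+2};q)_∞. -/

import Mathlib

open MeasureTheory

/-- The infinite q-Pochhammer symbol `(a;q)_∞`. -/
noncomputable def ap (q a : ℂ) : ℂ := ∏' k : ℕ, (1 - a * q ^ k)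

/-- The ratio `(r;q)_∞ / (t r;q)_∞`. -/
noncomputable def pochRatio (q t r : ℂ) : ℂ := ap q r / ap q (t * r)

/-- The point of the unit torus with angles `θ`. -/
noncomputable def torusPt {N : ℕ} (θ : Fin N → ℝ) : Fin N → ℂ :=
  fun i => Complex.exp (θ i * Complex.I)

section

open Filter Topology Set

section ap

theorem summable_norm_mul_pow {q : ℂ} (hq : ‖q‖ < 1) (a : ℂ) :
    Summable fun k : ℕ => ‖-(a * q ^ k)‖ := by
  simpa [norm_mul, norm_pow] using
    (summable_geometric_of_lt_one (norm_nonneg q) hq).mul_left ‖a‖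

theorem multipliable_ap {q : ℂ} (hq : ‖q‖ < 1) (a : ℂ) :
    Multipliable fun k : ℕ => 1 - a * q ^ k := by
  simpa [sub_eq_add_neg] using multipliable_one_add_of_summable (summable_norm_mul_pow hq a)

theorem ap_ne_zero' {q a : ℂ} (hq : ‖q‖ < 1) (h : ∀ k : ℕ, a * q ^ k ≠ 1) : ap q a ≠ 0 := by
  have := tprod_one_add_ne_zero_of_summable (f := fun k : ℕ => -(a * q ^ k))
    (fun k => by
      rw [← sub_eq_add_neg]
      exact sub_ne_zero.2 (h k).symm) (summable_norm_mul_pow hq a)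
  simpa [ap, sub_eq_add_neg] using this

theorem ap_ne_zero {q a : ℂ} (hq : ‖q‖ < 1) (ha : ‖a‖ < 1) : ap q a ≠ 0 := by
  refine ap_ne_zero' hq fun k h => ?_
  have h1 : ‖a * q ^ k‖ = 1 := by rw [h, norm_one]
  rw [norm_mul, norm_pow] at h1
  have : ‖q‖ ^ k ≤ 1 := pow_le_one₀ (norm_nonneg _) hq.le
  nlinarith [norm_nonneg a]

theorem ap_eq {q : ℂ} (hq : ‖q‖ < 1) (a : ℂ) : ap q a = (1 - a) * ap q (q * a) := by
  unfold ap
  have h : (fun k : ℕ => 1 - a * q ^ (k + 1)) = fun k => 1 - q * a * q ^ k := by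
    ext k; ring
  rw [tprod_eq_zero_mul' (h ▸ multipliable_ap hq (q * a)), h, pow_zero, mul_one]

theorem ap_zero (q : ℂ) : ap q 0 = 1 := by simp [ap]

theorem ap_mul_ap_four {q σ : ℂ} (hq : ‖q‖ < 1) (hσ : σ ^ 2 = q) (z : ℂ) :
    ap q z * ap q (-z) * (ap q (σ * z) * ap q (-(σ * z))) = ap q (z ^ 2) := by
  have h2 : ∀ z : ℂ, Multipliable fun k : ℕ => 1 - z * q ^ (2 * k) := fun z => by
    have : ‖q ^ 2‖ < 1 := by
      rw [norm_pow]; exact pow_lt_one₀ (norm_nonneg _) hq two_ne_zero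
    simpa [pow_mul] using multipliable_ap this z
  have hE : ∏' k : ℕ, (1 - z ^ 2 * q ^ (2 * k)) = ap q z * ap q (-z) := by
    unfold ap
    rw [← (multipliable_ap hq z).tprod_mul (multipliable_ap hq (-z))]
    exact tprod_congr fun k => by ring
  have hO : ∏' k : ℕ, (1 - z ^ 2 * q ^ (2 * k + 1)) = ap q (σ * z) * ap q (-(σ * z)) := by
    unfold ap
    rw [← (multipliable_ap hq (σ * z)).tprod_mul (multipliable_ap hq (-(σ * z)))]
    refine tprod_congr fun k => ?_
    rw [pow_succ, ← hσ]; ring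
  rw [← hE, ← hO]
  refine tprod_even_mul_odd (f := fun k => 1 - z ^ 2 * q ^ k) (h2 _) ?_
  refine (h2 (z ^ 2 * q)).congr fun k => ?_
  ring

theorem tendstoLocallyUniformlyOn_ap :
    HasProdLocallyUniformlyOn (fun (k : ℕ) (p : ℂ × ℂ) => 1 + -(p.2 * p.1 ^ k))
      (fun p => ∏' k : ℕ, (1 + -(p.2 * p.1 ^ k))) (Metric.ball (0 : ℂ) 1 ×ˢ univ) := by
  apply hasProdLocallyUniformlyOn_of_forall_compact (Metric.isOpen_ball.prod isOpen_univ)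
  intro K hK hcK
  rcases K.eq_empty_or_nonempty with hN | hN
  · simpa [hasProdUniformlyOn_iff_tendstoUniformlyOn, hN] using tendstoUniformlyOn_empty
  obtain ⟨p₀, hp₀, hmax⟩ := hcK.exists_isMaxOn hN (f := fun p : ℂ × ℂ => ‖p.1‖) (by fun_prop)
  obtain ⟨p₁, hp₁, hmax1⟩ := hcK.exists_isMaxOn hN (f := fun p : ℂ × ℂ => ‖p.2‖) (by fun_prop)
  have h0 : ‖p₀.1‖ < 1 := by simpa using (hK hp₀).1
  refine Summable.hasProdUniformlyOn_nat_one_add hcK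
    ((summable_geometric_of_lt_one (norm_nonneg p₀.1) h0).mul_left ‖p₁.2‖)
    (Eventually.of_forall fun n p hp => ?_) (fun n => by fun_prop)
  rw [norm_neg, norm_mul, norm_pow]
  have := hmax hp
  have := hmax1 hp
  simp only [mem_ofPred_eq] at *
  gcongr

theorem continuousOn_ap : ContinuousOn (fun p : ℂ × ℂ => ap p.1 p.2)
    (Metric.ball (0 : ℂ) 1 ×ˢ univ) := by
  have h := tendstoLocallyUniformlyOn_ap
  have : ContinuousOn (fun p : ℂ × ℂ => ∏' k : ℕ, (1 + -(p.2 * p.1 ^ k)))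
      (Metric.ball (0 : ℂ) 1 ×ˢ univ) := by
    refine TendstoLocallyUniformlyOn.continuousOn h (Frequently.of_forall fun s => ?_)
    fun_prop
  simpa [ap, sub_eq_add_neg] using this

theorem Continuous.ap {X : Type*} [TopologicalSpace X] {f g : X → ℂ} (hf : Continuous f)
    (hg : Continuous g) (h : ∀ x, ‖f x‖ < 1) : Continuous fun x => ap (f x) (g x) :=
  continuousOn_ap.comp_continuous (hf.prodMk hg) fun x => by simpa using h x

theorem differentiable_ap {q : ℂ} (hq : ‖q‖ < 1) : Differentiable ℂ (ap q) := by
  have h := tendstoLocallyUniformlyOn_ap.comp (fun a : ℂ => (q, a)) (t := univ)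
    (fun a _ => by simpa using hq) (by fun_prop)
  have := TendstoLocallyUniformlyOn.differentiableOn h
    (Eventually.of_forall fun s => by fun_prop) isOpen_univ
  simpa [_root_.ap, sub_eq_add_neg, Function.comp_def, differentiableOn_univ] using! this

end ap

/-- The product of `f (x i) (x j)` over the pairs `i < j`. -/
noncomputable def pairProd {n : ℕ} (f : ℂ → ℂ → ℂ) (x : Fin n → ℂ) : ℂ :=
  ∏ i : Fin n, ∏ j ∈ Finset.univ.filter (fun j => i < j), f (x i) (x j)

theorem pairProd_insertNth {n : ℕ} {f : ℂ → ℂ → ℂ} (hf : ∀ x y, f x y = f y x) (k : Fin (n + 1))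
    (z : ℂ) (y : Fin n → ℂ) :
    pairProd f (k.insertNth z y : Fin (n + 1) → ℂ) = (∏ j, f z (y j)) * pairProd f y := by
  unfold pairProd
  simp only [Finset.prod_filter]
  rw [Fin.prod_univ_succAbove _ k]
  simp only [Fin.prod_univ_succAbove _ k, Fin.insertNth_apply_same, Fin.insertNth_apply_succAbove,
    lt_irrefl, if_false, one_mul, Fin.succAbove_lt_succAbove_iff, Finset.prod_mul_distrib]
  rw [← mul_assoc, ← Finset.prod_mul_distrib]
  congr 1
  refine Finset.prod_congr rfl fun j _ => ?_
  rcases lt_or_gt_of_ne (Fin.succAbove_ne k j) with h | h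
  · rw [if_neg h.not_gt, if_pos h, one_mul, hf]
  · rw [if_neg h.not_gt, if_pos h, mul_one]

theorem pairProd_succ {n : ℕ} (f : ℂ → ℂ → ℂ) (x : Fin (n + 1) → ℂ) :
    pairProd f x = (∏ j : Fin n, f (x 0) (x j.succ)) * pairProd f (fun j => x j.succ) := by
  unfold pairProd
  simp only [Finset.prod_filter]
  rw [Fin.prod_univ_succ]
  simp [Fin.prod_univ_succ, Fin.succ_pos]

/-- `(c x^{±1} y^{±1};q)_∞`. -/
noncomputable def quad (q c x y : ℂ) : ℂ :=
  ap q (c * (x * y)) * ap q (c * (x * y⁻¹)) * ap q (c * (x⁻¹ * y)) * ap q (c * (x * y)⁻¹)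

theorem quad_comm (q c x y : ℂ) : quad q c x y = quad q c y x := by
  unfold quad
  rw [mul_comm x y, mul_comm x y⁻¹, mul_comm x⁻¹ y]
  ring

theorem quad_inv_left (q c x y : ℂ) : quad q c x⁻¹ y = quad q c x y := by
  unfold quad
  simp only [mul_inv, inv_inv]
  ring

/-- `∏_{r<s} (a_r a_s;q)_∞` for the entries of a list. -/
noncomputable def listPair (q : ℂ) : List ℂ → ℂ
  | [] => 1
  | a :: l => (l.map fun b => ap q (a * b)).prod * listPair q l

theorem listPair_perm (q : ℂ) {l l' : List ℂ} (h : l.Perm l') : listPair q l = listPair q l' := by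
  induction h with
  | nil => rfl
  | cons a h ih => simp only [listPair, ih, (h.map _).prod_eq]
  | swap a b l => simp only [listPair, List.map_cons, List.prod_cons, mul_comm b a]; ring
  | trans _ _ h1 h2 => rw [h1, h2]

theorem listPair_append (q : ℂ) (l l' : List ℂ) :
    listPair q (l ++ l') = listPair q l * listPair q l' *
      (l.map fun a => (l'.map fun b => ap q (a * b)).prod).prod := by
  induction l with
  | nil => simp [listPair]
  | cons a l ih => simp only [List.cons_append, listPair, ih, List.map_append, List.prod_append,
      List.map_cons, List.prod_cons]; ring

theorem listPair_ne_zero {q : ℂ} (hq : ‖q‖ < 1) {l : List ℂ} (hl : ∀ b ∈ l, ‖b‖ < 1) :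
    listPair q l ≠ 0 := by
  induction l with
  | nil => simp [listPair]
  | cons a l ih =>
    refine mul_ne_zero (List.prod_ne_zero fun h => ?_) (ih fun b hb => hl b (by simp [hb]))
    obtain ⟨b, hb, h⟩ := List.mem_map.1 h
    refine ap_ne_zero hq ?_ h
    rw [norm_mul]
    have h1 := hl a (by simp)
    have h2 := hl b (by simp [hb])
    nlinarith [norm_nonneg a, norm_nonneg b]

/-- The parameters `s x_i, s x_i⁻¹`. -/
noncomputable def dbl (s : ℂ) {n : ℕ} (x : Fin n → ℂ) : List ℂ :=
  (List.ofFn x).flatMap fun z => [s * z, s * z⁻¹]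

theorem dbl_succ (s : ℂ) {n : ℕ} (x : Fin (n + 1) → ℂ) :
    dbl s x = s * x 0 :: s * (x 0)⁻¹ :: dbl s (fun j => x j.succ) := by
  simp [dbl, List.ofFn_succ]

theorem dbl_length (s : ℂ) {n : ℕ} (x : Fin n → ℂ) : (dbl s x).length = 2 * n := by
  induction n with
  | zero => simp [dbl]
  | succ n ih => rw [dbl_succ]; simp [ih]; ring

theorem dbl_map_prod (s : ℂ) {n : ℕ} (x : Fin n → ℂ) (g : ℂ → ℂ) :
    ((dbl s x).map g).prod = ∏ i, g (s * x i) * g (s * (x i)⁻¹) := by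
  induction n with
  | zero => simp [dbl]
  | succ n ih => rw [dbl_succ, Fin.prod_univ_succ]; simp [ih, mul_assoc]

theorem dbl_prod {s : ℂ} {n : ℕ} {x : Fin n → ℂ} (hx : ∀ i, x i ≠ 0) :
    (dbl s x).prod = (s ^ 2) ^ n := by
  have := dbl_map_prod s x id
  rw [List.map_id] at this
  rw [this]
  have h : ∀ i, id (s * x i) * id (s * (x i)⁻¹) = s ^ 2 := fun i => by
    have := hx i
    simp only [id]; field_simp
  rw [Finset.prod_congr rfl fun i _ => h i]
  simp

theorem mem_dbl {s : ℂ} {n : ℕ} {x : Fin n → ℂ} (hs : ‖s‖ < 1) (hx : ∀ i, ‖x i‖ = 1) :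
    ∀ b ∈ dbl s x, ‖b‖ < 1 := by
  simp only [dbl, List.mem_flatMap, List.mem_ofFn]
  rintro b ⟨_, ⟨i, rfl⟩, hb⟩
  simp only [List.mem_cons, List.not_mem_nil, or_false] at hb
  rcases hb with rfl | rfl <;> simp [hx, hs]

theorem listPair_dbl (q : ℂ) {s : ℂ} {n : ℕ} {x : Fin n → ℂ} (hx : ∀ i, x i ≠ 0) :
    listPair q (dbl s x) = ap q (s ^ 2) ^ n * pairProd (quad q (s ^ 2)) x := by
  induction n with
  | zero => simp [dbl, listPair, pairProd]
  | succ n ih =>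
    rw [dbl_succ, pairProd_succ]
    simp only [listPair, List.map_cons, List.prod_cons, dbl_map_prod, ih fun j => hx j.succ]
    have h0 := hx 0
    have h1 : s * x 0 * (s * (x 0)⁻¹) = s ^ 2 := by field_simp
    have h2 : ∀ j : Fin n, quad q (s ^ 2) (x 0) (x j.succ) =
      (ap q (s * x 0 * (s * x j.succ)) * ap q (s * x 0 * (s * (x j.succ)⁻¹))) *
      (ap q (s * (x 0)⁻¹ * (s * x j.succ)) * ap q (s * (x 0)⁻¹ * (s * (x j.succ)⁻¹))) := by
      intro j
      unfold quad
      rw [mul_inv]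
      ring_nf
    simp only [h1, h2, Finset.prod_mul_distrib]
    ring

/-- The one-variable weight `(z^{±2};q)_∞ / ∏_b (b z^{±1};q)_∞`. -/
noncomputable def wt (q : ℂ) (l : List ℂ) (z : ℂ) : ℂ :=
  ap q (z ^ 2) * ap q (z⁻¹ ^ 2) / (l.map fun b => ap q (b * z) * ap q (b * z⁻¹)).prod

theorem wt_perm (q : ℂ) {l l' : List ℂ} (h : l.Perm l') (z : ℂ) : wt q l z = wt q l' z := by
  simp only [wt, (h.map _).prod_eq]

theorem wt_inv (q : ℂ) (l : List ℂ) (z : ℂ) : wt q l z⁻¹ = wt q l z := by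
  unfold wt
  rw [inv_inv, mul_comm (ap q (z⁻¹ ^ 2))]
  congr 3
  ext b
  rw [mul_comm]

/-- The integrand of the type I integral. -/
noncomputable def typeOne (q : ℂ) (l : List ℂ) {n : ℕ} (x : Fin n → ℂ) : ℂ :=
  pairProd (quad q 1) x * ∏ i, wt q l (x i)

theorem typeOne_perm (q : ℂ) {l l' : List ℂ} (h : l.Perm l') {n : ℕ} (x : Fin n → ℂ) :
    typeOne q l x = typeOne q l' x := by
  simp only [typeOne, wt_perm q h]

theorem wt_append (q : ℂ) (l l' : List ℂ) (z : ℂ) :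
    wt q (l ++ l') z = wt q l' z / (l.map fun b => ap q (b * z) * ap q (b * z⁻¹)).prod := by
  simp only [wt, List.map_append, List.prod_append, div_div]
  rw [mul_comm (List.prod _)]

theorem dbl_wt_prod (q s : ℂ) {n : ℕ} (x : Fin n → ℂ) (z : ℂ) :
    ((dbl s x).map fun b => ap q (b * z) * ap q (b * z⁻¹)).prod = ∏ i, quad q s (x i) z := by
  rw [dbl_map_prod]
  refine Finset.prod_congr rfl fun i _ => ?_
  unfold quad
  rw [mul_inv]
  simp only [mul_assoc]

open Polynomial in
theorem lagrange_sum {ι : Type*} [Fintype ι] [DecidableEq ι] (v : ι → ℂ)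
    (hv : Function.Injective v) (l : List ℂ) (hl : l.length + 1 = Fintype.card ι) :
    ∑ i, (l.map fun b => v i - b).prod / ∏ j, (if j = i then 1 else v i - v j) = 1 := by
  have hm : ∀ l : List ℂ, (l.map fun b => (X - C b : ℂ[X])).prod.Monic ∧
      (l.map fun b => (X - C b : ℂ[X])).prod.natDegree = l.length := by
    intro l
    induction l with
    | nil => simp
    | cons a l ih =>
      simp only [List.map_cons, List.prod_cons, List.length_cons]
      refine ⟨(monic_X_sub_C a).mul ih.1, ?_⟩
      rw [(monic_X_sub_C a).natDegree_mul ih.1, natDegree_X_sub_C, ih.2, add_comm]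
  obtain ⟨h1, h2⟩ := hm l
  have h3 : ((l.map fun b => (X - C b : ℂ[X])).prod).degree = l.length := by
    rw [degree_eq_natDegree h1.ne_zero, h2]
  have := Lagrange.leadingCoeff_eq_sum (s := Finset.univ) (v := v) hv.injOn
    (P := (l.map fun b => (X - C b : ℂ[X])).prod) (by
      rw [h3, Finset.card_univ, ← hl]; push_cast; rfl)
  rw [h1.leadingCoeff] at this
  refine (Finset.sum_congr rfl fun i _ => ?_).trans this.symm
  congr 1
  · have := map_list_prod (evalRingHom (v i)) (l.map fun b => (X - C b : ℂ[X]))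
    simpa [Function.comp_def] using this.symm
  · rw [← Finset.mul_prod_erase Finset.univ _ (Finset.mem_univ i), if_pos rfl, one_mul]
    exact Finset.prod_congr rfl fun j hj => by rw [if_neg (Finset.ne_of_mem_erase hj)]

theorem list_prod_sub (l : List ℂ) {z : ℂ} (hz : z ≠ 0) :
    (l.map fun b => z - b).prod = z ^ l.length * (l.map fun b => 1 - b * z⁻¹).prod := by
  induction l with
  | nil => simp
  | cons a l ih =>
    simp only [List.map_cons, List.prod_cons, List.length_cons, ih]
    field_simp
    ring

theorem list_prod_neg (l : List ℂ) :
    (l.map fun b => 0 - b).prod = (-1) ^ l.length * l.prod := by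
  induction l with
  | nil => simp
  | cons a l ih =>
    simp only [List.map_cons, List.prod_cons, List.length_cons, ih]
    ring

/-- The summands of the partial fraction identity behind the type I integral. -/
noncomputable def pfTerm (a : ℂ) (l : List ℂ) (z : ℂ) {n : ℕ} (y : Fin n → ℂ) : ℂ :=
  z * ((a :: l).map fun b => 1 - b * z⁻¹).prod * (∏ j, (1 - a * y j) * (1 - a * (y j)⁻¹)) /
    ((1 - z⁻¹ ^ 2) * ∏ j, (1 - y j * z⁻¹) * (1 - (y j)⁻¹ * z⁻¹))

theorem pfTerm_eq {n : ℕ} {a : ℂ} {l : List ℂ} (hl : l.length = 2 * (n + 1) + 1) {z : ℂ}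
    (hz : z ≠ 0) (ha : a ≠ 0) {y : Fin n → ℂ}
    (h1 : 1 - a * z ≠ 0) (h2 : 1 - a * z⁻¹ ≠ 0)
    (hy : ∀ j, (1 - a * y j) * (1 - a * (y j)⁻¹) ≠ 0) :
    (l.map fun b => z - b).prod /
      ((z - z⁻¹) * (∏ j, (z - y j) * (z - (y j)⁻¹)) * ((z - a⁻¹) * (z - 0))) =
    -a * pfTerm a l z y /
      ((1 - a * z) * (1 - a * z⁻¹) * ∏ j, (1 - a * y j) * (1 - a * (y j)⁻¹)) := by
  have e1 : ∏ j, (z - y j) * (z - (y j)⁻¹) =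
      z ^ (2 * n) * ∏ j, (1 - y j * z⁻¹) * (1 - (y j)⁻¹ * z⁻¹) := by
    have : ∀ j, (z - y j) * (z - (y j)⁻¹) = z ^ 2 * ((1 - y j * z⁻¹) * (1 - (y j)⁻¹ * z⁻¹)) := by
      intro j
      have : z * z⁻¹ = 1 := mul_inv_cancel₀ hz
      linear_combination (-(y j + (y j)⁻¹) * z + y j * (y j)⁻¹ * (z * z⁻¹ + 1)) * (-this)
    simp only [this, Finset.prod_mul_distrib (f := fun _ => z ^ 2)]
    simp [pow_mul]
  have e2 : z - z⁻¹ = z * (1 - z⁻¹ ^ 2) := by field_simp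
  have e3 : z - a⁻¹ = -a⁻¹ * (1 - a * z) := by field_simp; ring
  rw [list_prod_sub l hz, e1, e2, e3, hl]
  unfold pfTerm
  simp only [List.map_cons, List.prod_cons, sub_zero]
  have hY := Finset.prod_ne_zero_iff.2 fun j (_ : j ∈ Finset.univ) => hy j
  generalize (∏ j, (1 - a * y j) * (1 - a * (y j)⁻¹)) = Y at *
  generalize (∏ j, (1 - y j * z⁻¹) * (1 - (y j)⁻¹ * z⁻¹)) = D at *
  generalize (List.map (fun b => 1 - b * z⁻¹) l).prod = P at *
  generalize 1 - z⁻¹ ^ 2 = E at *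
  by_cases hD : D = 0
  · simp [hD]
  by_cases hE : E = 0
  · simp [hE]
  generalize 1 - a * z = A at *
  generalize 1 - a * z⁻¹ = B at *
  have : z ^ (2 * (n + 1) + 1) = z ^ (2 * n) * z ^ 3 := by ring
  rw [this]
  field_simp

theorem partial_fraction {n : ℕ} {a : ℂ} {l : List ℂ} (hl : l.length = 2 * (n + 1) + 1)
    (ha : a ≠ 0) {x : Fin (n + 1) → ℂ} (h0 : ∀ i, x i ≠ 0) (h1 : ∀ i, 1 - a * x i ≠ 0)
    (h2 : ∀ i, 1 - a * (x i)⁻¹ ≠ 0) (hx : Function.Injective x) (hx' : ∀ i j, x i * x j ≠ 1) :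
    ∑ k, (pfTerm a l (x k) (fun j => x (k.succAbove j)) +
      pfTerm a l (x k)⁻¹ (fun j => x (k.succAbove j))) =
    a⁻¹ * ((l.map fun b => 1 - a * b).prod -
      (1 - a * l.prod) * ∏ i, (1 - a * x i) * (1 - a * (x i)⁻¹)) := by
  let v : Fin (n + 1) ⊕ Fin (n + 1) ⊕ Bool → ℂ :=
    Sum.elim x (Sum.elim (fun k => (x k)⁻¹) (fun b => if b then a⁻¹ else 0))
  have hv : Function.Injective v := by
    have hxi : ∀ i j, x i ≠ (x j)⁻¹ := fun i j h => hx' i j (by rw [h, inv_mul_cancel₀ (h0 j)])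
    have hxa : ∀ i, x i ≠ a⁻¹ := fun i h => h1 i (by rw [h, mul_inv_cancel₀ ha, sub_self])
    have hxa' : ∀ i, (x i)⁻¹ ≠ a⁻¹ := fun i h => h2 i (by rw [h, mul_inv_cancel₀ ha, sub_self])
    rintro (i | i | i) (j | j | j) h <;> simp only [v, Sum.elim_inl, Sum.elim_inr] at h
    · rw [hx h]
    · exact absurd h (hxi i j)
    · cases j
      · exact absurd h (h0 i)
      · exact absurd h (hxa i)
    · exact absurd h.symm (hxi j i)
    · rw [hx (inv_injective h)]
    · cases j
      · exact absurd h (inv_ne_zero (h0 i))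
      · exact absurd h (hxa' i)
    · cases i
      · exact absurd h.symm (h0 j)
      · exact absurd h.symm (hxa j)
    · cases i
      · exact absurd h.symm (inv_ne_zero (h0 j))
      · exact absurd h.symm (hxa' j)
    · cases i <;> cases j <;> simp_all
  have key := lagrange_sum v hv l (by simp [hl]; ring)
  set Y := ∏ i, (1 - a * x i) * (1 - a * (x i)⁻¹) with hY
  have hY0 : Y ≠ 0 := Finset.prod_ne_zero_iff.2 fun i _ => mul_ne_zero (h1 i) (h2 i)
  have hYk : ∀ k, Y = (1 - a * x k) * (1 - a * (x k)⁻¹) *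
      ∏ j, (1 - a * x (k.succAbove j)) * (1 - a * (x (k.succAbove j))⁻¹) := fun k => by
    rw [hY, Fin.prod_univ_succAbove _ k]
  have t1 : ∀ k, (l.map fun b => x k - b).prod /
      ∏ j, (if j = Sum.inl k then 1 else x k - v j) =
      -a * pfTerm a l (x k) (fun j => x (k.succAbove j)) / Y := by
    intro k
    rw [hYk k, ← pfTerm_eq hl (h0 k) ha (h1 k) (h2 k) fun j => mul_ne_zero (h1 _) (h2 _)]
    congr 1
    simp only [Fintype.prod_sum_type, Fin.prod_univ_succAbove _ k, v]
    simp [Fin.succAbove_ne, Finset.prod_mul_distrib]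
    ring
  have t2 : ∀ k, (l.map fun b => (x k)⁻¹ - b).prod /
      ∏ j, (if j = Sum.inr (Sum.inl k) then 1 else (x k)⁻¹ - v j) =
      -a * pfTerm a l (x k)⁻¹ (fun j => x (k.succAbove j)) / Y := by
    intro k
    have := pfTerm_eq hl (inv_ne_zero (h0 k)) ha (h2 k) (by rw [inv_inv]; exact h1 k)
      (y := fun j => x (k.succAbove j)) fun j => mul_ne_zero (h1 _) (h2 _)
    rw [hYk k, mul_comm (1 - a * x k)]
    rw [inv_inv] at this
    rw [← this]
    congr 1
    simp only [Fintype.prod_sum_type, Fin.prod_univ_succAbove _ k, v]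
    simp [Fin.succAbove_ne, Finset.prod_mul_distrib]
    ring
  have t3 : (l.map fun b => a⁻¹ - b).prod /
      ∏ j, (if j = Sum.inr (Sum.inr true) then 1 else a⁻¹ - v j) =
      (l.map fun b => 1 - a * b).prod / Y := by
    have : (∏ j, (if j = Sum.inr (Sum.inr true) then 1 else a⁻¹ - v j)) =
      a⁻¹ ^ (2 * (n + 1) + 1) * Y := by
      have e : ∀ i, (a⁻¹ - x i) * (a⁻¹ - (x i)⁻¹) =
          a⁻¹ ^ 2 * ((1 - a * x i) * (1 - a * (x i)⁻¹)) := fun i => by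
        have := h0 i
        field_simp
      simp only [Fintype.prod_sum_type, v]
      simp only [reduceCtorEq, Sum.inr.injEq, if_false, Fintype.prod_bool, if_true, Sum.elim_inl,
        Sum.elim_inr, Bool.false_eq_true, sub_zero, one_mul]
      rw [← mul_assoc, ← Finset.prod_mul_distrib]
      simp only [e]
      rw [Finset.prod_mul_distrib]
      simp only [Finset.prod_const, Finset.card_univ, Fintype.card_fin]
      ring
    rw [this, list_prod_sub l (inv_ne_zero ha), hl, inv_inv, mul_div_mul_left]
    · simp only [mul_comm a]
    · exact pow_ne_zero _ (inv_ne_zero ha)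
  have t4 : (l.map fun b => 0 - b).prod /
      ∏ j, (if j = Sum.inr (Sum.inr false) then 1 else 0 - v j) = a * l.prod := by
    have : (∏ j, (if j = Sum.inr (Sum.inr false) then 1 else 0 - v j)) = -a⁻¹ := by
      simp only [Fintype.prod_sum_type, v]
      simp only [reduceCtorEq, Sum.inr.injEq, if_false, Fintype.prod_bool, if_true, Sum.elim_inl,
        Sum.elim_inr, zero_sub, mul_one, Bool.true_eq_false]
      rw [← mul_assoc, ← Finset.prod_mul_distrib]
      rw [Finset.prod_eq_one fun i _ => by have := h0 i; field_simp, one_mul]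
    rw [this, list_prod_neg, hl, Odd.neg_one_pow ⟨_, rfl⟩]
    field_simp
  rw [Fintype.sum_sum_type, Fintype.sum_sum_type, Fintype.sum_bool] at key
  simp only [v, Sum.elim_inl, Sum.elim_inr, if_true, Bool.false_eq_true, if_false] at key
  rw [Finset.sum_congr rfl fun k _ => t1 k, Finset.sum_congr rfl fun k _ => t2 k, t3, t4,
    ← Finset.sum_div, ← Finset.sum_div, ← Finset.mul_sum, ← Finset.mul_sum] at key
  rw [Finset.sum_add_distrib]
  field_simp at key ⊢
  linear_combination -key

/-- Lebesgue measure on the angle interval. -/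
noncomputable def angleMeasure : Measure ℝ := volume.restrict (Icc 0 (2 * Real.pi))

instance : IsFiniteMeasure angleMeasure := by unfold angleMeasure; infer_instance

/-- Lebesgue measure on the cube of angles. -/
noncomputable def cubeMeasure (n : ℕ) : Measure (Fin n → ℝ) := Measure.pi fun _ => angleMeasure

instance (n : ℕ) : IsFiniteMeasure (cubeMeasure n) := by unfold cubeMeasure; infer_instance

theorem cubeMeasure_eq (n : ℕ) :
    cubeMeasure n = volume.restrict (univ.pi fun _ : Fin n => Icc (0 : ℝ) (2 * Real.pi)) := by
  unfold cubeMeasure angleMeasure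
  rw [volume_pi, Measure.restrict_pi_pi]

theorem isCompact_cube (n : ℕ) : IsCompact (univ.pi fun _ : Fin n => Icc (0 : ℝ) (2 * Real.pi)) :=
  isCompact_univ_pi fun _ => isCompact_Icc

theorem integrable_cube {n : ℕ} {f : (Fin n → ℝ) → ℂ} (hf : Continuous f) :
    Integrable f (cubeMeasure n) := by
  rw [cubeMeasure_eq]
  exact hf.continuousOn.integrableOn_compact (isCompact_cube n)

theorem continuous_integral_cube {n : ℕ} {X : Type*} [TopologicalSpace X] [FirstCountableTopology X]
    [LocallyCompactSpace X] {f : X → (Fin n → ℝ) → ℂ} (hf : Continuous (Function.uncurry f)) :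
    Continuous fun x => ∫ θ, f x θ ∂cubeMeasure n := by
  rw [cubeMeasure_eq]
  exact continuous_parametric_integral_of_continuous hf (isCompact_cube n)

theorem integral_cube_swap {m n : ℕ} {f : (Fin m → ℝ) → (Fin n → ℝ) → ℂ}
    (hf : Continuous (Function.uncurry f)) :
    ∫ θ, ∫ φ, f θ φ ∂cubeMeasure n ∂cubeMeasure m =
      ∫ φ, ∫ θ, f θ φ ∂cubeMeasure m ∂cubeMeasure n := by
  refine integral_integral_swap ?_
  rw [cubeMeasure_eq, cubeMeasure_eq, Measure.prod_restrict]
  exact hf.continuousOn.integrableOn_compact ((isCompact_cube m).prod (isCompact_cube n))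

theorem integral_cube_insertNth {n : ℕ} (k : Fin (n + 1)) {f : (Fin (n + 1) → ℝ) → ℂ}
    (hf : Continuous f) :
    ∫ θ, f θ ∂cubeMeasure (n + 1) =
      ∫ φ, ∫ t, f (k.insertNth t φ : Fin (n + 1) → ℝ) ∂angleMeasure ∂cubeMeasure n := by
  have h := measurePreserving_piFinSuccAbove (fun _ : Fin (n + 1) => angleMeasure) k
  have h2 := h.symm.integral_comp' (g := f)
  have hi : Integrable (fun p : ℝ × (Fin n → ℝ) =>
      f ((MeasurableEquiv.piFinSuccAbove (fun _ => ℝ) k).symm p))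
      (angleMeasure.prod (cubeMeasure n)) :=
    (h.symm.integrable_comp_emb (MeasurableEquiv.measurableEmbedding _)).2 (integrable_cube hf)
  change ∫ θ, f θ ∂(Measure.pi fun _ => angleMeasure) = _
  rw [← h2]
  exact integral_prod_symm _ hi

/-- The point of the unit circle with angle `t`. -/
noncomputable def circlePt (t : ℝ) : ℂ := Complex.exp (t * Complex.I)

@[simp] theorem norm_circlePt (t : ℝ) : ‖circlePt t‖ = 1 := Complex.norm_exp_ofReal_mul_I t

@[simp] theorem circlePt_ne_zero (t : ℝ) : circlePt t ≠ 0 := Complex.exp_ne_zero _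

@[fun_prop] theorem continuous_circlePt : Continuous circlePt := by unfold circlePt; fun_prop

theorem circlePt_neg (t : ℝ) : circlePt (-t) = (circlePt t)⁻¹ := by
  unfold circlePt
  rw [← Complex.exp_neg]
  simp

theorem circlePt_add (s t : ℝ) : circlePt (s + t) = circlePt s * circlePt t := by
  unfold circlePt
  rw [← Complex.exp_add]
  congr 1
  push_cast
  ring

theorem circlePt_periodic : Function.Periodic circlePt (2 * Real.pi) := fun t => by
  rw [circlePt_add]
  have : circlePt (2 * Real.pi) = 1 := by
    unfold circlePt
    rw [← Complex.exp_two_pi_mul_I]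
    push_cast
    rfl
  rw [this, mul_one]

theorem integral_angle (f : ℝ → ℂ) :
    ∫ t, f t ∂angleMeasure = ∫ t in (0 : ℝ)..(2 * Real.pi), f t := by
  rw [intervalIntegral.integral_of_le Real.two_pi_pos.le, ← integral_Icc_eq_integral_Ioc]
  rfl

theorem integral_circlePt_inv (F : ℂ → ℂ) :
    ∫ t, F (circlePt t)⁻¹ ∂angleMeasure = ∫ t, F (circlePt t) ∂angleMeasure := by
  rw [integral_angle, integral_angle]
  simp only [← circlePt_neg]
  rw [intervalIntegral.integral_comp_neg fun t => F (circlePt t)]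
  have hp : Function.Periodic (fun t => F (circlePt t)) (2 * Real.pi) := circlePt_periodic.comp F
  have := hp.intervalIntegral_add_eq (-(2 * Real.pi)) 0
  simpa using this

theorem integral_circlePt_rotate (F : ℂ → ℂ) (s : ℝ) :
    ∫ t, F (circlePt s * circlePt t) ∂angleMeasure = ∫ t, F (circlePt t) ∂angleMeasure := by
  rw [integral_angle, integral_angle]
  simp only [← circlePt_add]
  rw [intervalIntegral.integral_comp_add_left fun t => F (circlePt t)]
  have hp : Function.Periodic (fun t => F (circlePt t)) (2 * Real.pi) := circlePt_periodic.comp F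
  have := hp.intervalIntegral_add_eq s 0
  simpa using this

theorem circleIntegral_inv_smul {R : ℝ} (hR : 0 < R) (F : ℂ → ℂ) :
    (∮ z in C(0, R), (z - 0)⁻¹ • F z) = Complex.I * ∫ t, F (R * circlePt t) ∂angleMeasure := by
  rw [integral_angle, ← intervalIntegral.integral_const_mul]
  unfold circleIntegral
  refine intervalIntegral.integral_congr fun t _ => ?_
  have h : circleMap 0 R t = R * circlePt t := by simp [circleMap, circlePt]
  have h0 : circleMap 0 R t ≠ 0 := circleMap_ne_center hR.ne'
  simp only [deriv_circleMap, sub_zero, smul_eq_mul, ← h]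
  field_simp

/-- A `q`-antisymmetric function on the annulus `|q| ≤ |z| ≤ 1` has vanishing constant term. -/
theorem integral_circlePt_eq_zero {q : ℂ} (hq0 : q ≠ 0) (hq : ‖q‖ < 1) {F : ℂ → ℂ}
    (hd : ∀ z, ‖q‖ ≤ ‖z‖ → ‖z‖ ≤ 1 → DifferentiableAt ℂ F z)
    (hs : ∀ z, ‖z‖ = 1 → F (q * z) = -F z⁻¹) :
    ∫ t, F (circlePt t) ∂angleMeasure = 0 := by
  have hr : 0 < ‖q‖ := norm_pos_iff.2 hq0
  have h := Complex.circleIntegral_sub_center_inv_smul_eq_of_differentiable_on_annulus_off_countable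
    (c := 0) (f := F) hr hq.le countable_empty
    (fun z hz => (hd z (by simpa using hz.2) (by simpa using hz.1)).continuousAt.continuousWithinAt)
    (fun z hz => hd z (by simpa using (not_le.1 (by simpa using hz.1.2)).le)
      (by simpa using (Metric.mem_ball.1 hz.1.1).le))
  rw [circleIntegral_inv_smul one_pos, circleIntegral_inv_smul hr] at h
  have h := mul_left_cancel₀ Complex.I_ne_zero h
  have hqa : q = ‖q‖ * circlePt q.arg := (Complex.norm_mul_exp_arg_mul_I q).symm
  rw [← integral_circlePt_rotate (fun z => F (‖q‖ * z)) q.arg] at h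
  simp only [← mul_assoc, ← hqa] at h
  simp only [Complex.ofReal_one, one_mul] at h
  rw [integral_congr_ae (.of_forall fun t => hs _ (norm_circlePt t)), integral_neg,
    integral_circlePt_inv] at h
  exact self_eq_neg.1 h

/-- Generic angles are dense, so identities of continuous functions extend. -/
theorem eq_of_eq_on_generic {n : ℕ} {f g : (Fin n → ℝ) → ℂ} (hf : Continuous f) (hg : Continuous g)
    (h : ∀ θ, Function.Injective (torusPt θ) → (∀ i j, torusPt θ i * torusPt θ j ≠ 1) →
      f θ = g θ) : f = g := by
  ext θ
  let p : ℝ → Fin n → ℝ := fun ε i => θ i + ε * ((i : ℕ) + 1)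
  have hp : Continuous p := by fun_prop
  have hp0 : p 0 = θ := by ext i; simp [p]
  have key : ∀ α β : ℝ, β ≠ 0 → ∀ᶠ ε in 𝓝[≠] (0 : ℝ), circlePt (α + ε * β) ≠ 1 := by
    intro α β hβ
    have h1 : HasDerivAt (fun ε : ℝ => ((α + ε * β : ℝ) : ℂ) * Complex.I) (β * Complex.I) 0 := by
      have : HasDerivAt (fun ε : ℝ => α + ε * β) β 0 := by
        simpa using ((hasDerivAt_id (0 : ℝ)).mul_const β).const_add α
      exact this.ofReal_comp.mul_const _
    exact h1.cexp.eventually_ne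
      (mul_ne_zero (Complex.exp_ne_zero _) (mul_ne_zero (by exact_mod_cast hβ) Complex.I_ne_zero))
  have h1 : ∀ i j : Fin n, ∀ᶠ ε in 𝓝[≠] (0 : ℝ), torusPt (p ε) i * torusPt (p ε) j ≠ 1 := by
    intro i j
    filter_upwards [key (θ i + θ j) ((i : ℕ) + 1 + ((j : ℕ) + 1)) (by positivity)] with ε hε
    change circlePt (p ε i) * circlePt (p ε j) ≠ 1
    rw [← circlePt_add]
    convert hε using 2
    simp only [p]; ring
  have h2 : ∀ i j : Fin n, ∀ᶠ ε in 𝓝[≠] (0 : ℝ), torusPt (p ε) i = torusPt (p ε) j → i = j := by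
    intro i j
    by_cases hij : i = j
    · simp [hij]
    have : ((i : ℕ) : ℝ) - (j : ℕ) ≠ 0 := by
      rw [sub_ne_zero]; exact_mod_cast Fin.val_ne_of_ne hij
    filter_upwards [key (θ i - θ j) _ this] with ε hε he
    refine absurd ?_ hε
    change circlePt (p ε i) = circlePt (p ε j) at he
    have e : θ i - θ j + ε * (((i : ℕ) : ℝ) - (j : ℕ)) = p ε i + -p ε j := by
      simp only [p]; ring
    rw [e, circlePt_add, circlePt_neg, he, mul_inv_cancel₀ (circlePt_ne_zero _)]
  have h3 : ∀ᶠ ε in 𝓝[≠] (0 : ℝ), f (p ε) = g (p ε) := by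
    filter_upwards [eventually_all.2 fun i => eventually_all.2 fun j => h1 i j,
      eventually_all.2 fun i => eventually_all.2 fun j => h2 i j] with ε h1 h2
    exact h _ (fun i j hij => h2 i j hij) h1
  have tf : Tendsto (fun ε => f (p ε)) (𝓝[≠] 0) (𝓝 (f θ)) := by
    have := (hf.comp hp).tendsto 0
    simp only [Function.comp_def, hp0] at this
    exact this.mono_left nhdsWithin_le_nhds
  have tg : Tendsto (fun ε => g (p ε)) (𝓝[≠] 0) (𝓝 (g θ)) := by
    have := (hg.comp hp).tendsto 0
    simp only [Function.comp_def, hp0] at this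
    exact this.mono_left nhdsWithin_le_nhds
  exact tendsto_nhds_unique (tf.congr' h3) tg

theorem torusPt_insertNth {n : ℕ} (k : Fin (n + 1)) (t : ℝ) (φ : Fin n → ℝ) :
    torusPt (k.insertNth t φ : Fin (n + 1) → ℝ) =
      (k.insertNth (circlePt t) (torusPt φ) : Fin (n + 1) → ℂ) := by
  ext i
  refine Fin.succAboveCases k ?_ (fun j => ?_) i
  · simp [torusPt, circlePt]
  · simp [torusPt]

@[simp] theorem norm_torusPt {n : ℕ} (θ : Fin n → ℝ) (i : Fin n) : ‖torusPt θ i‖ = 1 :=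
  norm_circlePt _

@[simp] theorem torusPt_ne_zero {n : ℕ} (θ : Fin n → ℝ) (i : Fin n) : torusPt θ i ≠ 0 :=
  circlePt_ne_zero _

@[fun_prop] theorem continuous_torusPt_apply {n : ℕ} (i : Fin n) :
    Continuous fun θ : Fin n → ℝ => torusPt θ i :=
  continuous_circlePt.comp (continuous_apply i)

section Continuity

variable {X : Type*} [TopologicalSpace X] {q : ℂ}

theorem continuous_ap_comp (hq : ‖q‖ < 1) {g : X → ℂ} (hg : Continuous g) :
    Continuous fun x => ap q (g x) :=
  (differentiable_ap hq).continuous.comp hg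

theorem continuous_quad (hq : ‖q‖ < 1) {c f g : X → ℂ} (hc : Continuous c) (hf : Continuous f)
    (hg : Continuous g) (hf0 : ∀ x, f x ≠ 0) (hg0 : ∀ x, g x ≠ 0) :
    Continuous fun x => quad q (c x) (f x) (g x) := by
  unfold quad
  refine ((Continuous.mul ?_ ?_).mul ?_).mul ?_ <;>
    exact continuous_ap_comp hq (by fun_prop (disch := simp [hf0, hg0]))

theorem continuous_pairProd {n : ℕ} {F : X → ℂ → ℂ → ℂ} {f : X → Fin n → ℂ}
    (h : ∀ i j, Continuous fun x => F x (f x i) (f x j)) :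
    Continuous fun x => pairProd (F x) (f x) := by
  unfold pairProd
  exact continuous_finsetProd _ fun i _ => continuous_finsetProd _ fun j _ => h i j

theorem list_prod_ap_ne_zero (hq : ‖q‖ < 1) {l : List ℂ} (hl : ∀ b ∈ l, ‖b‖ < 1) {z w : ℂ}
    (hz : ‖z‖ ≤ 1) (hw : ‖w‖ ≤ 1) : (l.map fun b => ap q (b * z) * ap q (b * w)).prod ≠ 0 := by
  refine List.prod_ne_zero ?_
  simp only [List.mem_map, not_exists, not_and]
  intro b hb
  have h (u : ℂ) (hu : ‖u‖ ≤ 1) : ap q (b * u) ≠ 0 :=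
    ap_ne_zero hq (by
      rw [norm_mul]; exact (mul_le_of_le_one_right (norm_nonneg _) hu).trans_lt (hl b hb))
  exact mul_ne_zero (h z hz) (h w hw)

theorem continuous_wt (hq : ‖q‖ < 1) {l : List ℂ} (hl : ∀ b ∈ l, ‖b‖ < 1) {f : X → ℂ}
    (hf : Continuous f) (h1 : ∀ x, ‖f x‖ = 1) : Continuous fun x => wt q l (f x) := by
  have h0 (x) : f x ≠ 0 := norm_ne_zero_iff.1 (by rw [h1]; exact one_ne_zero)
  have hf' := hf.inv₀ h0
  unfold wt
  refine Continuous.div ((continuous_ap_comp hq (by fun_prop)).mul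
    (continuous_ap_comp hq (by fun_prop))) ?_ fun x =>
      list_prod_ap_ne_zero hq hl (h1 x).le (by rw [norm_inv, h1, inv_one])
  refine continuous_list_prod _ fun b _ => ?_
  exact (continuous_ap_comp hq (by fun_prop)).mul (continuous_ap_comp hq (by fun_prop))

theorem continuous_typeOne (hq : ‖q‖ < 1) {l : List ℂ} (hl : ∀ b ∈ l, ‖b‖ < 1) {n : ℕ}
    {f : X → Fin n → ℂ} (hf : ∀ i, Continuous fun x => f x i) (h1 : ∀ x i, ‖f x i‖ = 1) :
    Continuous fun x => typeOne q l (f x) := by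
  have h0 (x i) : f x i ≠ 0 := norm_ne_zero_iff.1 (by rw [h1]; exact one_ne_zero)
  unfold typeOne
  refine Continuous.mul (continuous_pairProd fun i j => ?_) (continuous_finsetProd _ fun i _ => ?_)
  · exact continuous_quad hq continuous_const (hf i) (hf j) (h0 · i) (h0 · j)
  · exact continuous_wt hq hl (hf i) (h1 · i)

end Continuity

theorem wt_cons (q a : ℂ) (l : List ℂ) (z : ℂ) :
    wt q (a :: l) z = wt q l z / (ap q (a * z) * ap q (a * z⁻¹)) := by
  simpa using wt_append q [a] l z

theorem typeOne_cons (q a : ℂ) (l : List ℂ) {n : ℕ} (x : Fin n → ℂ) :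
    typeOne q (a :: l) x = typeOne q l x / ∏ i, ap q (a * x i) * ap q (a * (x i)⁻¹) := by
  simp only [typeOne, wt_cons, Finset.prod_div_distrib, mul_div_assoc]

theorem typeOne_insertNth (q : ℂ) (l : List ℂ) {n : ℕ} (k : Fin (n + 1)) (z : ℂ) (y : Fin n → ℂ) :
    typeOne q l (k.insertNth z y : Fin (n + 1) → ℂ) =
      typeOne q l y * ((∏ j, quad q 1 z (y j)) * wt q l z) := by
  rw [typeOne, typeOne, pairProd_insertNth (quad_comm q 1), Fin.prod_univ_succAbove _ k]
  simp only [Fin.insertNth_apply_same, Fin.insertNth_apply_succAbove]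
  ring

/-- The single-variable factor of a type I integrand times its partial fraction term. -/
noncomputable def residueTerm (q : ℂ) (l : List ℂ) (z : ℂ) {n : ℕ} (y : Fin n → ℂ) : ℂ :=
  z * (ap q (z ^ 2) * ap q (q * z⁻¹ ^ 2)) /
      (l.map fun b => ap q (b * z) * ap q (b * (q * z⁻¹))).prod *
    ∏ j, (ap q (z * y j) * ap q (z * (y j)⁻¹)) *
      (ap q (q * (y j * z⁻¹)) * ap q (q * ((y j)⁻¹ * z⁻¹)))

theorem residueTerm_mul_left {q : ℂ} (hq0 : q ≠ 0) (hq : ‖q‖ < 1) (l : List ℂ) {z : ℂ} (hz : z ≠ 0)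
    {n : ℕ} (y : Fin n → ℂ) : residueTerm q l (q * z) y = -residueTerm q l z⁻¹ y := by
  unfold residueTerm
  rw [inv_inv, ← neg_mul, ← neg_div]
  congr 1
  · congr 1
    · rw [show q * (q * z)⁻¹ ^ 2 = q⁻¹ * z⁻¹ ^ 2 by field_simp, ap_eq hq (q⁻¹ * z⁻¹ ^ 2),
        ap_eq hq (q * z ^ 2), show q * (q⁻¹ * z⁻¹ ^ 2) = z⁻¹ ^ 2 by field_simp,
        show q * (q * z ^ 2) = (q * z) ^ 2 by ring]
      field_simp
      ring
    · congr 2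
      ext b
      rw [mul_comm (ap q _), show q * (q * z)⁻¹ = z⁻¹ by field_simp]
  · refine Finset.prod_congr rfl fun j _ => ?_
    have h : q * (q * z)⁻¹ = z⁻¹ := by field_simp
    rw [show q * (y j * (q * z)⁻¹) = z⁻¹ * y j by rw [← h]; ring,
      show q * ((y j)⁻¹ * (q * z)⁻¹) = z⁻¹ * (y j)⁻¹ by rw [← h]; ring,
      show q * z * y j = q * (y j * z) by ring, show q * z * (y j)⁻¹ = q * ((y j)⁻¹ * z) by ring]
    ring

theorem differentiableAt_residueTerm {q : ℂ} (hq0 : q ≠ 0) (hq : ‖q‖ < 1) {l : List ℂ}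
    (hl : ∀ b ∈ l, ‖b‖ < 1) {n : ℕ} (y : Fin n → ℂ) {z : ℂ} (h1 : ‖q‖ ≤ ‖z‖) (h2 : ‖z‖ ≤ 1) :
    DifferentiableAt ℂ (fun z => residueTerm q l z y) z := by
  have hz : z ≠ 0 := norm_pos_iff.1 ((norm_pos_iff.2 hq0).trans_le h1)
  have hi : DifferentiableAt ℂ (fun z : ℂ => z⁻¹) z := differentiableAt_inv hz
  have hap {f : ℂ → ℂ} (hf : DifferentiableAt ℂ f z) : DifferentiableAt ℂ (fun z => ap q (f z)) z :=
    (differentiable_ap hq _).comp z hf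
  unfold residueTerm
  refine DifferentiableAt.mul (DifferentiableAt.div (differentiableAt_id.mul
    ((hap (by fun_prop)).mul (hap (by fun_prop)))) ?_ ?_)
      (DifferentiableAt.fun_finsetProd fun j _ =>
        ((hap (by fun_prop)).mul (hap (by fun_prop))).mul
          ((hap (by fun_prop)).mul (hap (by fun_prop))))
  · clear hl
    induction l with
    | nil => simp
    | cons b l ih =>
      simp only [List.map_cons, List.prod_cons]
      exact ((hap (by fun_prop)).mul (hap (by fun_prop))).mul ih
  · refine list_prod_ap_ne_zero hq hl h2 ?_
    rw [norm_mul, norm_inv]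
    exact div_le_one_of_le₀ h1 (norm_nonneg _)

theorem integral_residueTerm {q : ℂ} (hq0 : q ≠ 0) (hq : ‖q‖ < 1) {l : List ℂ}
    (hl : ∀ b ∈ l, ‖b‖ < 1) {n : ℕ} (y : Fin n → ℂ) :
    ∫ t, residueTerm q l (circlePt t) y ∂angleMeasure = 0 :=
  integral_circlePt_eq_zero (F := fun z => residueTerm q l z y) hq0 hq
    (fun _ h1 h2 => differentiableAt_residueTerm hq0 hq hl y h1 h2)
    fun _ hz => residueTerm_mul_left hq0 hq l (norm_ne_zero_iff.1 (by rw [hz]; exact one_ne_zero)) y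

theorem continuous_residueTerm {X : Type*} [TopologicalSpace X] {q : ℂ} (hq : ‖q‖ < 1) {l : List ℂ}
    (hl : ∀ b ∈ l, ‖b‖ < 1) {n : ℕ} {f : X → ℂ} (hf : Continuous f) (h1 : ∀ x, ‖f x‖ = 1)
    {g : X → Fin n → ℂ} (hg : ∀ i, Continuous fun x => g x i) (hg0 : ∀ x i, g x i ≠ 0) :
    Continuous fun x => residueTerm q l (f x) (g x) := by
  have hf0 (x) : f x ≠ 0 := norm_ne_zero_iff.1 (by rw [h1]; exact one_ne_zero)
  have hap {e : X → ℂ} (he : Continuous e) := continuous_ap_comp hq he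
  unfold residueTerm
  refine Continuous.mul (Continuous.div (hf.mul ((hap ?_).mul (hap ?_)))
    (continuous_list_prod _ fun b _ => (hap ?_).mul (hap ?_))
    fun x => list_prod_ap_ne_zero hq hl (h1 x).le ?_)
    (continuous_finsetProd _ fun j _ => ((hap ?_).mul (hap ?_)).mul ((hap ?_).mul (hap ?_)))
  on_goal 5 =>
    rw [norm_mul, norm_inv, h1, inv_one, mul_one]
    exact hq.le
  all_goals fun_prop (disch := first | exact hf0 | simp [hg0])

theorem typeOne_mul_pfTerm {q : ℂ} (hq : ‖q‖ < 1) {a : ℂ} {l : List ℂ} (hl : ∀ b ∈ a :: l, ‖b‖ < 1)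
    {n : ℕ} (k : Fin (n + 1)) {z : ℂ} (hz : ‖z‖ = 1) (hz2 : z ^ 2 ≠ 1) {y : Fin n → ℂ}
    (hy1 : ∀ j, y j ≠ z) (hy2 : ∀ j, y j * z ≠ 1) (hy0 : ∀ j, y j ≠ 0) :
    typeOne q (a :: l) (k.insertNth z y : Fin (n + 1) → ℂ) * pfTerm a l z y =
      (typeOne q (a :: l) y * ∏ j, (1 - a * y j) * (1 - a * (y j)⁻¹)) *
        residueTerm q (a :: l) z y := by
  have hz0 : z ≠ 0 := norm_ne_zero_iff.1 (by rw [hz]; exact one_ne_zero)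
  have hzi : ‖z⁻¹‖ ≤ 1 := by rw [norm_inv, hz, inv_one]
  have hzz : 1 - z⁻¹ ^ 2 ≠ 0 := by
    rw [inv_pow, sub_ne_zero]
    exact fun h => hz2 (inv_eq_one.1 h.symm)
  have hfac (w : ℂ) (hw : w ≠ z) : 1 - w * z⁻¹ ≠ 0 := by
    rw [sub_ne_zero]
    exact fun h => hw (by rw [← mul_inv_eq_one₀ hz0]; exact h.symm)
  have hq1 : (∏ j, (1 - y j * z⁻¹) * (1 - (y j)⁻¹ * z⁻¹)) ≠ 0 := by
    refine Finset.prod_ne_zero_iff.2 fun j _ => mul_ne_zero (hfac _ (hy1 j)) (hfac _ fun h => ?_)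
    exact hy2 j (by rw [← h, mul_inv_cancel₀ (hy0 j)])
  have hB (L : List ℂ) : (L.map fun b => ap q (b * z) * ap q (b * z⁻¹)).prod =
      (L.map fun b => 1 - b * z⁻¹).prod *
        (L.map fun b => ap q (b * z) * ap q (b * (q * z⁻¹))).prod := by
    rw [← List.prod_map_mul]
    congr 2
    ext b
    rw [ap_eq hq (b * z⁻¹), show q * (b * z⁻¹) = b * (q * z⁻¹) by ring]
    ring
  have hC : (∏ j, quad q 1 z (y j)) = (∏ j, (1 - y j * z⁻¹) * (1 - (y j)⁻¹ * z⁻¹)) *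
      ∏ j, (ap q (z * y j) * ap q (z * (y j)⁻¹)) *
        (ap q (q * (y j * z⁻¹)) * ap q (q * ((y j)⁻¹ * z⁻¹))) := by
    rw [← Finset.prod_mul_distrib]
    refine Finset.prod_congr rfl fun j _ => ?_
    rw [quad]
    simp only [one_mul]
    rw [mul_comm z⁻¹ (y j), show (z * y j)⁻¹ = (y j)⁻¹ * z⁻¹ by rw [mul_inv, mul_comm],
      ap_eq hq (y j * z⁻¹), ap_eq hq ((y j)⁻¹ * z⁻¹)]
    ring
  have hP := list_prod_ap_ne_zero hq hl hz.le hzi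
  rw [hB] at hP
  have hP1 := left_ne_zero_of_mul hP
  have hP2 := right_ne_zero_of_mul hP
  rw [typeOne_insertNth, hC, wt, hB, ap_eq hq (z⁻¹ ^ 2), pfTerm, residueTerm]
  generalize a :: l = L at *
  generalize (L.map fun b => 1 - b * z⁻¹).prod = A at *
  generalize (L.map fun b => ap q (b * z) * ap q (b * (q * z⁻¹))).prod = B at *
  generalize (∏ j, (1 - y j * z⁻¹) * (1 - (y j)⁻¹ * z⁻¹)) = D at *
  generalize 1 - z⁻¹ ^ 2 = E at *
  generalize (∏ j, (ap q (z * y j) * ap q (z * (y j)⁻¹)) *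
        (ap q (q * (y j * z⁻¹)) * ap q (q * ((y j)⁻¹ * z⁻¹)))) = F at *
  generalize (∏ j, (1 - a * y j) * (1 - a * (y j)⁻¹)) = G
  generalize ap q (q * z⁻¹ ^ 2) = H
  field_simp

/-- The type I integral with list of parameters `l`. -/
noncomputable def typeOneIntegral (q : ℂ) (n : ℕ) (l : List ℂ) : ℂ :=
  ∫ θ, typeOne q l (torusPt θ) ∂cubeMeasure n

theorem typeOneIntegral_perm (q : ℂ) (n : ℕ) {l l' : List ℂ} (h : l.Perm l') :
    typeOneIntegral q n l = typeOneIntegral q n l' := by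
  simp only [typeOneIntegral, typeOne_perm q h]

theorem typeOne_insertNth_inv (q : ℂ) (l : List ℂ) {n : ℕ} (k : Fin (n + 1)) (z : ℂ)
    (y : Fin n → ℂ) : typeOne q l (k.insertNth z⁻¹ y : Fin (n + 1) → ℂ) =
      typeOne q l (k.insertNth z y : Fin (n + 1) → ℂ) := by
  simp only [typeOne_insertNth, wt_inv, quad_inv_left]

theorem typeOne_mul_left {q : ℂ} (hq : ‖q‖ < 1) {a : ℂ} {l : List ℂ} (ha : ‖a‖ < 1)
    {n : ℕ} {x : Fin n → ℂ} (hx : ∀ i, ‖x i‖ = 1) :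
    typeOne q (q * a :: l) x =
      (∏ i, (1 - a * x i) * (1 - a * (x i)⁻¹)) * typeOne q (a :: l) x := by
  have h (u : ℂ) (hu : ‖u‖ = 1) : ap q (a * u) ≠ 0 :=
    ap_ne_zero hq (by rwa [norm_mul, hu, mul_one])
  have hne : (∏ i, ap q (a * x i) * ap q (a * (x i)⁻¹)) ≠ 0 :=
    Finset.prod_ne_zero_iff.2 fun i _ =>
      mul_ne_zero (h _ (hx i)) (h _ (by rw [norm_inv, hx, inv_one]))
  have e : (∏ i, ap q (a * x i) * ap q (a * (x i)⁻¹)) =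
      (∏ i, (1 - a * x i) * (1 - a * (x i)⁻¹)) *
        ∏ i, ap q (q * a * x i) * ap q (q * a * (x i)⁻¹) := by
    rw [← Finset.prod_mul_distrib]
    refine Finset.prod_congr rfl fun i _ => ?_
    rw [ap_eq hq (a * x i), ap_eq hq (a * (x i)⁻¹), mul_assoc q, mul_assoc q]
    ring
  rw [e] at hne
  have h1 := left_ne_zero_of_mul hne
  have h2 := right_ne_zero_of_mul hne
  rw [typeOne_cons, typeOne_cons, e]
  generalize (∏ i, (1 - a * x i) * (1 - a * (x i)⁻¹)) = A at *
  field_simp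

theorem typeOneIntegral_mul_left {q : ℂ} (hq0 : q ≠ 0) (hq : ‖q‖ < 1) {n : ℕ} {a : ℂ} {l : List ℂ}
    (hl : l.length = 2 * (n + 1) + 1) (hb : ∀ b ∈ a :: l, ‖b‖ < 1) :
    (1 - a * l.prod) * typeOneIntegral q (n + 1) (q * a :: l) =
      (l.map fun b => 1 - a * b).prod * typeOneIntegral q (n + 1) (a :: l) := by
  obtain rfl | ha0 := eq_or_ne a 0
  · simp
  have ha : ‖a‖ < 1 := hb a (by simp)
  have hqa : ‖q * a‖ < 1 := by
    rw [norm_mul]; exact (mul_le_of_le_one_left (norm_nonneg _) hq.le).trans_lt ha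
  have hb' : ∀ b ∈ q * a :: l, ‖b‖ < 1 := by
    simp only [List.mem_cons, forall_eq_or_imp] at hb ⊢
    exact ⟨hqa, hb.2⟩
  let C (y : Fin n → ℂ) : ℂ := typeOne q (a :: l) y * ∏ j, (1 - a * y j) * (1 - a * (y j)⁻¹)
  let y (k : Fin (n + 1)) (θ : Fin (n + 1) → ℝ) (j : Fin n) : ℂ := torusPt θ (k.succAbove j)
  let S (k : Fin (n + 1)) (θ : Fin (n + 1) → ℝ) : ℂ := C (y k θ) *
    (residueTerm q (a :: l) (torusPt θ k) (y k θ) + residueTerm q (a :: l) (torusPt θ k)⁻¹ (y k θ))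
  have hC {X : Type} [TopologicalSpace X] {g : X → Fin n → ℂ} (hg : ∀ i, Continuous fun x => g x i)
      (hg1 : ∀ x i, ‖g x i‖ = 1) : Continuous fun x => C (g x) := by
    have hg0 (x i) : g x i ≠ 0 := norm_ne_zero_iff.1 (by rw [hg1 x i]; exact one_ne_zero)
    exact (continuous_typeOne hq hb hg hg1).mul
      (continuous_finsetProd _ fun i _ => by fun_prop (disch := simp [hg0]))
  have hy (k) (i) : Continuous fun θ => y k θ i := by fun_prop
  have hy1 (k) (θ) (i) : ‖y k θ i‖ = 1 := norm_torusPt _ _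
  have hy0 (k) (θ) (i) : y k θ i ≠ 0 := torusPt_ne_zero _ _
  have hti (k : Fin (n + 1)) : Continuous fun θ : Fin (n + 1) → ℝ => (torusPt θ k)⁻¹ :=
    (continuous_torusPt_apply k).inv₀ fun θ => torusPt_ne_zero _ _
  have hS (k) : Continuous (S k) :=
    (hC (hy k) (hy1 k)).mul
      ((continuous_residueTerm hq hb (continuous_torusPt_apply k) (by simp) (hy k) (hy0 k)).add
        (continuous_residueTerm hq hb (hti k) (by simp) (hy k) (hy0 k)))
  have hc1 : Continuous fun θ : Fin (n + 1) → ℝ => typeOne q (a :: l) (torusPt θ) :=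
    continuous_typeOne hq hb (by fun_prop) (by simp)
  have hc2 : Continuous fun θ : Fin (n + 1) → ℝ => typeOne q (q * a :: l) (torusPt θ) :=
    continuous_typeOne hq hb' (by fun_prop) (by simp)
  have hid : (fun θ => ∑ k, S k θ) = fun θ => a⁻¹ * ((l.map fun b => 1 - a * b).prod *
      typeOne q (a :: l) (torusPt θ) - (1 - a * l.prod) * typeOne q (q * a :: l) (torusPt θ)) := by
    refine eq_of_eq_on_generic (continuous_finsetSum _ fun k _ => hS k) (by fun_prop)
      fun θ hinj hne => ?_
    have hfac (u : ℂ) (hu : ‖u‖ = 1) : 1 - a * u ≠ 0 := by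
      rw [sub_ne_zero]
      intro h
      have := congrArg norm h
      rw [norm_mul, hu, norm_one, mul_one] at this
      exact ha.ne this.symm
    have hpf := partial_fraction hl ha0 (x := torusPt θ) (torusPt_ne_zero θ)
      (fun i => hfac _ (norm_torusPt θ i)) (fun i => hfac _ (by simp)) hinj hne
    rw [typeOne_mul_left hq ha (norm_torusPt θ), ← mul_assoc (1 - a * l.prod), ← sub_mul,
      ← mul_assoc, ← hpf, Finset.sum_mul]
    refine Finset.sum_congr rfl fun k _ => ?_
    have hins : torusPt θ = (k.insertNth (torusPt θ k) (y k θ) : Fin (n + 1) → ℂ) :=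
      (Fin.insertNth_self_removeNth k (torusPt θ)).symm
    have hk (j : Fin n) : k.succAbove j ≠ k := Fin.succAbove_ne k j
    have e1 := typeOne_mul_pfTerm hq hb k (norm_torusPt θ k) (by rw [pow_two]; exact hne k k)
      (y := y k θ) (fun j h => hk j (hinj h)) (fun j => hne _ _) (hy0 k θ)
    have e2 := typeOne_mul_pfTerm hq hb k (z := (torusPt θ k)⁻¹) (by simp)
      (by rw [inv_pow, Ne, inv_eq_one, pow_two]; exact hne k k) (y := y k θ)
      (fun j h => hne _ k (by rw [← mul_inv_cancel₀ (torusPt_ne_zero θ k), mul_comm]; congr 1))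
      (fun j h => hk j (hinj (by
        rwa [← div_eq_mul_inv, div_eq_one_iff_eq (torusPt_ne_zero θ k)] at h)))
      (hy0 k θ)
    rw [typeOne_insertNth_inv] at e2
    rw [← hins] at e1 e2
    simp only [S, C, mul_add]
    rw [← e1, ← e2]
    ring
  have hzero (k) : ∫ θ, S k θ ∂cubeMeasure (n + 1) = 0 := by
    rw [integral_cube_insertNth k (hS k)]
    refine (integral_congr_ae (.of_forall fun φ => ?_)).trans (integral_zero _ _)
    have e (t : ℝ) : S k (k.insertNth t φ : Fin (n + 1) → ℝ) =
        C (torusPt φ) * (residueTerm q (a :: l) (circlePt t) (torusPt φ) +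
          residueTerm q (a :: l) (circlePt t)⁻¹ (torusPt φ)) := by
      have : y k (k.insertNth t φ : Fin (n + 1) → ℝ) = torusPt φ := by
        ext j
        simp [y, torusPt_insertNth]
      simp only [S, this]
      rw [torusPt_insertNth, Fin.insertNth_apply_same]
    have hint {f : ℝ → ℂ} (hf : Continuous f) : Integrable f angleMeasure :=
      hf.continuousOn.integrableOn_compact isCompact_Icc
    simp only [e]
    rw [integral_const_mul, integral_add, integral_circlePt_inv
      (fun z => residueTerm q (a :: l) z (torusPt φ)), integral_residueTerm hq0 hq hb]
    · simp
    · exact hint (continuous_residueTerm hq hb (by fun_prop) (by simp) (fun i => continuous_const)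
        fun _ i => torusPt_ne_zero φ i)
    · exact hint (continuous_residueTerm hq hb (continuous_circlePt.inv₀ circlePt_ne_zero) (by simp)
        (fun i => continuous_const) fun _ i => torusPt_ne_zero φ i)
  have hI := congrArg (fun f => ∫ θ, f θ ∂cubeMeasure (n + 1)) hid
  simp only at hI
  rw [integral_finsetSum _ fun k _ => integrable_cube (hS k)] at hI
  simp only [hzero, Finset.sum_const_zero] at hI
  rw [integral_const_mul,
    integral_sub (integrable_cube (by fun_prop)) (integrable_cube (by fun_prop)),
    integral_const_mul, integral_const_mul] at hI
  have := (mul_eq_zero.1 hI.symm).resolve_left (inv_ne_zero ha0)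
  exact (sub_eq_zero.1 this).symm

/-- The open unit disc as a parameter space. -/
abbrev UnitDisc : Type := Metric.ball (0 : ℂ) 1

instance : LocallyCompactSpace UnitDisc := Metric.isOpen_ball.locallyCompactSpace

theorem UnitDisc.norm_lt (a : UnitDisc) : ‖(a : ℂ)‖ < 1 := mem_ball_zero_iff.1 a.2

theorem continuous_typeOneIntegral_cons {q : ℂ} (hq : ‖q‖ < 1) (n : ℕ) {l : List ℂ}
    (hl : ∀ b ∈ l, ‖b‖ < 1) : Continuous fun a : UnitDisc => typeOneIntegral q n (a :: l) := by
  unfold typeOneIntegral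
  refine continuous_integral_cube ?_
  unfold Function.uncurry
  simp only [typeOne_cons]
  have h (u : ℂ) (hu : ‖u‖ = 1) (a : UnitDisc) : ap q (a * u) ≠ 0 :=
    ap_ne_zero hq (by rw [norm_mul, hu, mul_one]; exact a.norm_lt)
  refine Continuous.div (continuous_typeOne hq hl (by fun_prop) (by simp))
    (continuous_finsetProd _ fun i _ => ?_) fun p => Finset.prod_ne_zero_iff.2 fun i _ =>
      mul_ne_zero (h _ (by simp) _) (h _ (by simp) _)
  have hap {e : UnitDisc × (Fin n → ℝ) → ℂ} (he : Continuous e) := continuous_ap_comp hq he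
  exact (hap (by fun_prop)).mul (hap (by fun_prop (disch := simp)))

theorem norm_list_prod_le {l : List ℂ} (hl : ∀ b ∈ l, ‖b‖ < 1) : ‖l.prod‖ ≤ 1 := by
  induction l with
  | nil => simp
  | cons a l ih =>
    simp only [List.mem_cons, forall_eq_or_imp] at hl
    rw [List.prod_cons, norm_mul]
    exact mul_le_one₀ hl.1.le (norm_nonneg _) (ih hl.2)

theorem ap_mul_ne_zero {q : ℂ} (hq : ‖q‖ < 1) {a b : ℂ} (ha : ‖a‖ < 1) (hb : ‖b‖ ≤ 1) :
    ap q (a * b) ≠ 0 :=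
  ap_ne_zero hq (by rw [norm_mul]; exact (mul_le_of_le_one_right (norm_nonneg _) hb).trans_lt ha)

theorem typeOneIntegral_cons {q : ℂ} (hq0 : q ≠ 0) (hq : ‖q‖ < 1) {n : ℕ} {a : ℂ} {l : List ℂ}
    (hl : l.length = 2 * (n + 1) + 1) (ha : ‖a‖ < 1) (hb : ∀ b ∈ l, ‖b‖ < 1) :
    typeOneIntegral q (n + 1) (a :: l) * (l.map fun b => ap q (a * b)).prod =
      ap q (a * l.prod) * typeOneIntegral q (n + 1) (0 :: l) := by
  have hP := norm_list_prod_le hb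
  let G (a : UnitDisc) : ℂ := typeOneIntegral q (n + 1) (a :: l) *
    (l.map fun b => ap q (a * b)).prod / ap q (a * l.prod)
  have hG : Continuous G := by
    have hap {e : UnitDisc → ℂ} (he : Continuous e) := continuous_ap_comp hq he
    exact ((continuous_typeOneIntegral_cons hq (n + 1) hb).mul
      (continuous_list_prod _ fun b _ => hap (by fun_prop))).div (hap (by fun_prop))
        fun a => ap_mul_ne_zero hq a.norm_lt hP
  have hqa (a : UnitDisc) : ‖q * a‖ < 1 := by
    rw [norm_mul]; exact (mul_le_of_le_one_left (norm_nonneg _) hq.le).trans_lt a.norm_lt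
  have hstep (a : UnitDisc) : G ⟨q * a, by simpa using hqa a⟩ = G a := by
    have h := typeOneIntegral_mul_left hq0 hq hl (a := a)
      (by simpa only [List.mem_cons, forall_eq_or_imp] using ⟨a.norm_lt, hb⟩)
    have h1 := ap_mul_ne_zero hq a.norm_lt hP
    have h2 := ap_mul_ne_zero hq (hqa a) hP
    have e : (l.map fun b => ap q (a * b)).prod = (l.map fun b => 1 - (a : ℂ) * b).prod *
        (l.map fun b => ap q (q * a * b)).prod := by
      rw [← List.prod_map_mul]
      congr 2
      ext b
      rw [ap_eq hq (a * b), mul_assoc]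
    have e2 := ap_eq hq (a * l.prod)
    rw [← mul_assoc] at e2
    change _ / _ = _ / _
    rw [div_eq_div_iff h2 h1, e, e2]
    linear_combination (l.map fun b => ap q (q * a * b)).prod * ap q (q * a * l.prod) * h
  have hlim (a : UnitDisc) : G a = G ⟨0, by simp⟩ := by
    have hqk (k : ℕ) : ‖q ^ k * a‖ < 1 := by
      rw [norm_mul, norm_pow]
      exact (mul_le_of_le_one_left (norm_nonneg _) (pow_le_one₀ (norm_nonneg _) hq.le)).trans_lt
        a.norm_lt
    have hk (k : ℕ) : G ⟨q ^ k * a, by simpa using hqk k⟩ = G a := by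
      induction k with
      | zero => simp
      | succ k ih =>
        rw [← ih, ← hstep ⟨q ^ k * a, by simpa using hqk k⟩]
        simp only [pow_succ', mul_assoc]
    have ht : Tendsto (fun k : ℕ => (⟨q ^ k * a, by simpa using hqk k⟩ : UnitDisc)) atTop
        (𝓝 ⟨0, by simp⟩) := by
      rw [tendsto_subtype_rng]
      simpa using (tendsto_pow_atTop_nhds_zero_of_norm_lt_one hq).mul_const (a : ℂ)
    have := (hG.tendsto _).comp ht
    simp only [Function.comp_def, hk] at this
    exact tendsto_nhds_unique tendsto_const_nhds this
  have h := hlim ⟨a, by simpa using ha⟩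
  simp only [G, zero_mul, ap_zero, div_one, List.map_const', List.prod_replicate, one_pow,
    mul_one] at h
  rw [div_eq_iff (ap_mul_ne_zero hq ha hP)] at h
  rw [h, mul_comm]

/-- The type I integral with vanishing parameters. -/
noncomputable def typeOneConst (q : ℂ) (n : ℕ) : ℂ :=
  typeOneIntegral q n (List.replicate (2 * n + 2) 0)

theorem listPair_replicate_zero (q : ℂ) (m : ℕ) : listPair q (List.replicate m 0) = 1 := by
  induction m with
  | zero => simp [listPair]
  | succ m ih => simp [List.replicate_succ, listPair, ih, ap_zero]

theorem typeOneIntegral_append_replicate {q : ℂ} (hq0 : q ≠ 0) (hq : ‖q‖ < 1) {n : ℕ} {l : List ℂ}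
    (m : ℕ) (hl : l.length + m = 2 * (n + 1) + 2) (hb : ∀ b ∈ l, ‖b‖ < 1) :
    typeOneIntegral q (n + 1) (l ++ List.replicate m 0) * listPair q (l ++ List.replicate m 0) =
      ap q (l ++ List.replicate m 0).prod * typeOneConst q (n + 1) := by
  induction l generalizing m with
  | nil =>
    have hm : m = 2 * (n + 1) + 2 := by simpa using hl
    subst hm
    rw [List.nil_append, listPair_replicate_zero, List.prod_replicate, zero_pow (by omega), ap_zero,
      mul_one, one_mul, typeOneConst]
  | cons a l ih =>
    simp only [List.mem_cons, forall_eq_or_imp] at hb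
    simp only [List.length_cons] at hl
    have h := ih (m + 1) (by omega) hb.2
    have hp : (l ++ List.replicate (m + 1) (0 : ℂ)).Perm (0 :: (l ++ List.replicate m 0)) := by
      rw [List.replicate_succ]; exact List.perm_middle
    rw [typeOneIntegral_perm q _ hp, listPair_perm q hp, hp.prod_eq, List.prod_cons, zero_mul,
      ap_zero, one_mul, listPair] at h
    simp only [zero_mul, ap_zero, List.map_const', List.prod_replicate, one_pow, one_mul] at h
    have h2 := typeOneIntegral_cons hq0 hq (n := n) (a := a) (l := l ++ List.replicate m 0)
      (by simp; omega) hb.1 (by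
        simp only [List.mem_append, List.mem_replicate]
        rintro b (hb' | ⟨-, rfl⟩)
        · exact hb.2 b hb'
        · simp)
    rw [List.cons_append, listPair, List.prod_cons]
    linear_combination listPair q (l ++ List.replicate m 0) * h2 +
      ap q (a * (l ++ List.replicate m 0).prod) * h

theorem typeOneIntegral_zero (q : ℂ) (l : List ℂ) : typeOneIntegral q 0 l = 1 := by
  have (θ : Fin 0 → ℝ) : typeOne q l (torusPt θ) = 1 := by simp [typeOne, pairProd]
  simp [typeOneIntegral, this, cubeMeasure, Measure.real, Measure.pi_empty_univ]

/-- The type I integral evaluation, up to the constant at vanishing parameters. -/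
theorem typeOneIntegral_mul_listPair {q : ℂ} (hq0 : q ≠ 0) (hq : ‖q‖ < 1) {n : ℕ} {l : List ℂ}
    (hl : l.length = 2 * n + 2) (hb : ∀ b ∈ l, ‖b‖ < 1) :
    typeOneIntegral q n l * listPair q l = ap q l.prod * typeOneConst q n := by
  cases n with
  | zero =>
    obtain ⟨a, b, rfl⟩ := List.length_eq_two.1 hl
    simp [typeOneIntegral_zero, typeOneConst, listPair]
  | succ n => simpa using typeOneIntegral_append_replicate hq0 hq 0 (by simpa using hl) hb

theorem quad_ne_zero {q : ℂ} (hq : ‖q‖ < 1) {s x y : ℂ} (hs : ‖s‖ < 1) (hx : ‖x‖ = 1)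
    (hy : ‖y‖ = 1) : quad q s x y ≠ 0 := by
  have h (u : ℂ) (hu : ‖u‖ = 1) : ap q (s * u) ≠ 0 := ap_mul_ne_zero hq hs hu.le
  exact mul_ne_zero (mul_ne_zero (mul_ne_zero (h _ (by simp [hx, hy])) (h _ (by simp [hx, hy])))
    (h _ (by simp [hx, hy]))) (h _ (by simp [hx, hy]))

theorem pairProd_ne_zero {n : ℕ} {f : ℂ → ℂ → ℂ} {x : Fin n → ℂ} (h : ∀ i j, f (x i) (x j) ≠ 0) :
    pairProd f x ≠ 0 :=
  Finset.prod_ne_zero_iff.2 fun _ _ => Finset.prod_ne_zero_iff.2 fun _ _ => h _ _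

theorem typeOne_dbl_append (q s : ℂ) (l : List ℂ) {m n : ℕ} (x : Fin m → ℂ) (y : Fin n → ℂ) :
    typeOne q (dbl s x ++ l) y = typeOne q l y / ∏ j, ∏ i, quad q s (x i) (y j) := by
  simp only [typeOne, wt_append, dbl_wt_prod, Finset.prod_div_distrib, mul_div_assoc]

/-- The four parameters `±ρ, ±σρ`. -/
def fourList (σ ρ : ℂ) : List ℂ := [ρ, -ρ, σ * ρ, -(σ * ρ)]

theorem fourList_map_prod {q σ : ℂ} (hq : ‖q‖ < 1) (hσ : σ ^ 2 = q) (ρ z : ℂ) :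
    ((fourList σ ρ).map fun b => ap q (z * b)).prod = ap q (ρ ^ 2 * z ^ 2) := by
  rw [← mul_pow, ← ap_mul_ap_four hq hσ]
  simp only [fourList, List.map_cons, List.map_nil, List.prod_cons, List.prod_nil]
  rw [mul_comm z ρ, show z * -ρ = -(ρ * z) by ring, show z * (σ * ρ) = σ * (ρ * z) by ring,
    show z * -(σ * ρ) = -(σ * (ρ * z)) by ring]
  ring

theorem norm_fourList {q σ ρ : ℂ} (hq : ‖q‖ < 1) (hσ : σ ^ 2 = q) (hρ : ‖ρ‖ < 1) :
    ∀ b ∈ fourList σ ρ, ‖b‖ < 1 := by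
  have h1 : ‖σ‖ ^ 2 < 1 := by rwa [← norm_pow, hσ]
  have h2 : ‖σ * ρ‖ < 1 := by
    rw [norm_mul]
    exact mul_lt_one_of_nonneg_of_lt_one_left (norm_nonneg _)
      ((sq_lt_one_iff₀ (norm_nonneg _)).1 h1) hρ.le
  simp only [fourList, List.mem_cons, List.not_mem_nil, or_false]
  rintro b (rfl | rfl | rfl | rfl) <;>
    first | simpa using hρ | simpa only [norm_neg] using h2

theorem wt_fourList {q σ : ℂ} (hq : ‖q‖ < 1) (hσ : σ ^ 2 = q) (ρ z : ℂ) :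
    wt q (fourList σ ρ) z =
      ap q (z ^ 2) * ap q (z⁻¹ ^ 2) / (ap q (ρ ^ 2 * z ^ 2) * ap q (ρ ^ 2 * z⁻¹ ^ 2)) := by
  rw [wt, List.prod_map_mul]
  simp only [mul_comm _ z, mul_comm _ z⁻¹, fourList_map_prod hq hσ]

/-- The factor produced by integrating out one set of variables. -/
noncomputable def stepFactor (q v : ℂ) : ℂ := (1 + v) * (ap q (q * v ^ 2) / ap q (q * v)) ^ 2

theorem norm_mul_lt_one {q v : ℂ} (hq : ‖q‖ < 1) (hv : ‖v‖ ≤ 1) : ‖q * v‖ < 1 := by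
  rw [norm_mul]; exact (mul_le_of_le_one_right (norm_nonneg _) hv).trans_lt hq

theorem stepFactor_mul {q v : ℂ} (hq : ‖q‖ < 1) (hv : ‖v‖ < 1) :
    stepFactor q v * (ap q v * ap q (q * v)) = ap q (v ^ 2) * ap q (q * v ^ 2) := by
  have h1 := ap_ne_zero hq (norm_mul_lt_one hq hv.le)
  rw [stepFactor, ap_eq hq v, ap_eq hq (v ^ 2)]
  generalize ap q (q * v) = A at *
  generalize ap q (q * v ^ 2) = B at *
  field_simp
  ring

theorem listPair_fourList {q σ ρ : ℂ} (hq : ‖q‖ < 1) (hσ : σ ^ 2 = q) (hρ : ‖ρ‖ < 1) :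
    listPair q (fourList σ ρ) = stepFactor q (ρ ^ 2) := by
  have hv : ‖ρ ^ 2‖ < 1 := by
    rw [norm_pow]; exact (sq_lt_one_iff₀ (norm_nonneg _)).2 hρ
  refine mul_right_cancel₀ (mul_ne_zero (ap_ne_zero hq hv)
    (ap_ne_zero hq (norm_mul_lt_one hq hv.le))) ?_
  rw [stepFactor_mul hq hv, ← ap_mul_ap_four hq hσ (ρ ^ 2),
    show q * (ρ ^ 2) ^ 2 = (σ * ρ ^ 2) ^ 2 by rw [← hσ]; ring, ← ap_mul_ap_four hq hσ (σ * ρ ^ 2),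
    ← hσ]
  simp only [fourList, listPair, List.map_cons, List.map_nil, List.prod_cons, List.prod_nil]
  rw [show ρ * -ρ = -ρ ^ 2 by ring, show ρ * (σ * ρ) = σ * ρ ^ 2 by ring,
    show ρ * -(σ * ρ) = -(σ * ρ ^ 2) by ring, show -ρ * (σ * ρ) = -(σ * ρ ^ 2) by ring,
    show -ρ * -(σ * ρ) = σ * ρ ^ 2 by ring,
    show σ * ρ * -(σ * ρ) = -(σ * (σ * ρ ^ 2)) by ring,
    show σ ^ 2 * ρ ^ 2 = σ * (σ * ρ ^ 2) by ring]
  ring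

/-- The type II integrand, regularised by `v`. -/
noncomputable def regIntegrand (q t v : ℂ) {n : ℕ} (x : Fin n → ℂ) : ℂ :=
  pairProd (quad q 1) x / pairProd (quad q t) x *
    ∏ i, ap q (x i ^ 2) * ap q ((x i)⁻¹ ^ 2) / (ap q (v * x i ^ 2) * ap q (v * (x i)⁻¹ ^ 2))

/-- The type II integral, regularised by `v`. -/
noncomputable def regIntegral (q t v : ℂ) (n : ℕ) : ℂ :=
  ∫ θ, regIntegrand q t v (torusPt θ) ∂cubeMeasure n

theorem regIntegrand_eq {q σ : ℂ} (hq : ‖q‖ < 1) (hσ : σ ^ 2 = q) (t ρ : ℂ) {n : ℕ}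
    (x : Fin n → ℂ) :
    regIntegrand q t (ρ ^ 2) x = typeOne q (fourList σ ρ) x / pairProd (quad q t) x := by
  simp only [regIntegrand, typeOne, wt_fourList hq hσ]
  ring

theorem regIntegral_succ_sq {q σ s ρ : ℂ} (hq0 : q ≠ 0) (hq : ‖q‖ < 1) (hσ : σ ^ 2 = q)
    (hs : ‖s‖ < 1) (hρ : ‖ρ‖ < 1) (n : ℕ) :
    ap q ((s ^ 2) ^ (n + 1)) * typeOneConst q n * stepFactor q (ρ ^ 2) *
        regIntegral q (s ^ 2) (ρ ^ 2) (n + 1) =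
      ap q (q * (s ^ 2) ^ n * (ρ ^ 2) ^ 2) * typeOneConst q (n + 1) * ap q (s ^ 2) *
        regIntegral q (s ^ 2) (s ^ 2 * ρ ^ 2) n := by
  have ht : ‖s ^ 2‖ < 1 := by
    rw [norm_pow]; exact (sq_lt_one_iff₀ (norm_nonneg _)).2 hs
  have hv : ‖ρ ^ 2‖ < 1 := by
    rw [norm_pow]; exact (sq_lt_one_iff₀ (norm_nonneg _)).2 hρ
  have hL := norm_fourList hq hσ hρ
  have hapt := ap_ne_zero hq ht
  have hpp {m : ℕ} (θ : Fin m → ℝ) : pairProd (quad q (s ^ 2)) (torusPt θ) ≠ 0 :=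
    pairProd_ne_zero fun i j => quad_ne_zero hq ht (by simp) (by simp)
  have hswap : ∀ (θ : Fin (n + 1) → ℝ) (φ : Fin n → ℝ),
      typeOne q (fourList σ ρ) (torusPt θ) * typeOne q (dbl s (torusPt θ)) (torusPt φ) =
      typeOne q [] (torusPt φ) *
        typeOne q (dbl s (torusPt φ) ++ fourList σ ρ) (torusPt θ) := by
    intro θ φ
    have h := typeOne_dbl_append q s [] (torusPt θ) (torusPt φ)
    rw [List.append_nil] at h
    rw [h, typeOne_dbl_append, Finset.prod_comm]
    simp only [quad_comm q s (torusPt θ _)]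
    ring
  have hcont : Continuous (Function.uncurry fun (θ : Fin (n + 1) → ℝ) (φ : Fin n → ℝ) =>
      typeOne q (fourList σ ρ) (torusPt θ) * typeOne q (dbl s (torusPt θ)) (torusPt φ)) := by
    unfold Function.uncurry
    have h (θ : Fin (n + 1) → ℝ) := typeOne_dbl_append q s [] (torusPt θ) (n := n)
    simp only [List.append_nil] at h
    simp only [h]
    refine (continuous_typeOne hq hL (by fun_prop) (by simp)).mul
      ((continuous_typeOne hq (by simp) (by fun_prop) (by simp)).div
        (continuous_finsetProd _ fun j _ => continuous_finsetProd _ fun i _ =>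
          continuous_quad hq continuous_const (by fun_prop) (by fun_prop) (by simp) (by simp)) ?_)
    exact fun p => Finset.prod_ne_zero_iff.2 fun j _ => Finset.prod_ne_zero_iff.2 fun i _ =>
      quad_ne_zero hq hs (by simp) (by simp)
  have hI := integral_cube_swap hcont
  simp only [integral_const_mul] at hI
  have hx (θ : Fin (n + 1) → ℝ) : typeOne q (fourList σ ρ) (torusPt θ) *
      ∫ φ, typeOne q (dbl s (torusPt θ)) (torusPt φ) ∂cubeMeasure n =
      ap q ((s ^ 2) ^ (n + 1)) * typeOneConst q n / ap q (s ^ 2) ^ (n + 1) *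
        regIntegrand q (s ^ 2) (ρ ^ 2) (torusPt θ) := by
    have h := typeOneIntegral_mul_listPair hq0 hq (n := n) (l := dbl s (torusPt θ))
      (by rw [dbl_length]; ring) (mem_dbl hs (by simp))
    rw [listPair_dbl q (torusPt_ne_zero θ), dbl_prod (torusPt_ne_zero θ)] at h
    change _ * typeOneIntegral q n _ = _
    rw [regIntegrand_eq hq hσ]
    have := hpp θ
    field_simp
    linear_combination typeOne q (fourList σ ρ) (torusPt θ) * h
  have hy (φ : Fin n → ℝ) : (∫ θ, typeOne q (fourList σ ρ) (torusPt θ) *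
        typeOne q (dbl s (torusPt θ)) (torusPt φ) ∂cubeMeasure (n + 1)) =
      ap q (q * (s ^ 2) ^ n * (ρ ^ 2) ^ 2) * typeOneConst q (n + 1) /
        (ap q (s ^ 2) ^ n * stepFactor q (ρ ^ 2)) *
        regIntegrand q (s ^ 2) (s ^ 2 * ρ ^ 2) (torusPt φ) := by
    simp only [hswap, integral_const_mul]
    have hmem : ∀ b ∈ dbl s (torusPt φ) ++ fourList σ ρ, ‖b‖ < 1 := by
      simp only [List.mem_append]
      rintro b (h | h)
      · exact mem_dbl hs (by simp) b h
      · exact hL b h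
    have h := typeOneIntegral_mul_listPair hq0 hq (n := n + 1)
      (l := dbl s (torusPt φ) ++ fourList σ ρ)
      (by rw [List.length_append, dbl_length]; simp [fourList]; ring) hmem
    have hne := listPair_ne_zero hq hmem
    have hprod : (dbl s (torusPt φ) ++ fourList σ ρ).prod = q * (s ^ 2) ^ n * (ρ ^ 2) ^ 2 := by
      rw [List.prod_append, dbl_prod (torusPt_ne_zero φ), ← hσ]
      simp [fourList]
      ring
    have hlp : listPair q (dbl s (torusPt φ) ++ fourList σ ρ) =
        ap q (s ^ 2) ^ n * pairProd (quad q (s ^ 2)) (torusPt φ) * stepFactor q (ρ ^ 2) *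
          ∏ i, ap q (s ^ 2 * ρ ^ 2 * torusPt φ i ^ 2) *
            ap q (s ^ 2 * ρ ^ 2 * (torusPt φ i)⁻¹ ^ 2) := by
      rw [listPair_append, listPair_dbl q (torusPt_ne_zero φ), listPair_fourList hq hσ hρ,
        dbl_map_prod]
      simp only [fourList_map_prod hq hσ]
      congr 1
      refine Finset.prod_congr rfl fun i _ => ?_
      rw [show ρ ^ 2 * (s * torusPt φ i) ^ 2 = s ^ 2 * ρ ^ 2 * torusPt φ i ^ 2 by ring,
        show ρ ^ 2 * (s * (torusPt φ i)⁻¹) ^ 2 = s ^ 2 * ρ ^ 2 * (torusPt φ i)⁻¹ ^ 2 by ring]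
    rw [hprod, hlp] at h
    rw [hlp] at hne
    have h4 := right_ne_zero_of_mul hne
    have h3 := right_ne_zero_of_mul (left_ne_zero_of_mul hne)
    have h2 := hpp φ
    change _ * typeOneIntegral q (n + 1) _ = _
    have hreg : regIntegrand q (s ^ 2) (s ^ 2 * ρ ^ 2) (torusPt φ) * (pairProd (quad q (s ^ 2))
        (torusPt φ) * ∏ i, ap q (s ^ 2 * ρ ^ 2 * torusPt φ i ^ 2) *
            ap q (s ^ 2 * ρ ^ 2 * (torusPt φ i)⁻¹ ^ 2)) = typeOne q [] (torusPt φ) := by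
      rw [regIntegrand, typeOne, Finset.prod_div_distrib]
      simp only [wt, List.map_nil, List.prod_nil, div_one]
      generalize (∏ i, ap q (s ^ 2 * ρ ^ 2 * torusPt φ i ^ 2) *
            ap q (s ^ 2 * ρ ^ 2 * (torusPt φ i)⁻¹ ^ 2)) = B at *
      generalize (∏ i, ap q (torusPt φ i ^ 2) * ap q ((torusPt φ i)⁻¹ ^ 2)) = C at *
      field_simp
    rw [← hreg, div_mul_eq_mul_div, eq_div_iff (mul_ne_zero (pow_ne_zero _ hapt) h3)]
    linear_combination regIntegrand q (s ^ 2) (s ^ 2 * ρ ^ 2) (torusPt φ) * h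
  simp only [hx, hy, integral_const_mul] at hI
  have hsf : stepFactor q (ρ ^ 2) ≠ 0 := by
    rw [← listPair_fourList hq hσ hρ]; exact listPair_ne_zero hq hL
  change _ * regIntegral q (s ^ 2) (ρ ^ 2) (n + 1) =
    _ * regIntegral q (s ^ 2) (s ^ 2 * ρ ^ 2) n at hI
  generalize ap q (q * (s ^ 2) ^ n * (ρ ^ 2) ^ 2) = E at *
  generalize ap q ((s ^ 2) ^ (n + 1)) = F at *
  rw [div_mul_eq_mul_div, div_mul_eq_mul_div, div_eq_div_iff (pow_ne_zero _ hapt)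
    (mul_ne_zero (pow_ne_zero _ hapt) hsf)] at hI
  refine mul_left_cancel₀ (pow_ne_zero n hapt) ?_
  linear_combination hI

theorem stepFactor_ne_zero {q v : ℂ} (hq : ‖q‖ < 1) (hv : ‖v‖ ≤ 1) (hv1 : 1 + v ≠ 0) :
    stepFactor q v ≠ 0 :=
  mul_ne_zero hv1 (pow_ne_zero _ (div_ne_zero
    (ap_mul_ne_zero hq hq (by rw [norm_pow]; exact pow_le_one₀ (norm_nonneg _) hv))
    (ap_mul_ne_zero hq hq hv)))

theorem exists_sq_eq_of_norm_lt_one {a : ℂ} (ha : ‖a‖ < 1) : ∃ b : ℂ, ‖b‖ < 1 ∧ b ^ 2 = a := by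
  obtain ⟨b, hb⟩ := IsAlgClosed.exists_pow_nat_eq a two_pos
  exact ⟨b, (sq_lt_one_iff₀ (norm_nonneg _)).1 (by rwa [← norm_pow, hb]), hb⟩

theorem regIntegral_succ {q t v : ℂ} (hq0 : q ≠ 0) (hq : ‖q‖ < 1) (ht : ‖t‖ < 1) (hv : ‖v‖ < 1)
    (n : ℕ) :
    ap q (t ^ (n + 1)) * typeOneConst q n * stepFactor q v * regIntegral q t v (n + 1) =
      ap q (q * t ^ n * v ^ 2) * typeOneConst q (n + 1) * ap q t * regIntegral q t (t * v) n := by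
  obtain ⟨σ, -, hσ⟩ := exists_sq_eq_of_norm_lt_one hq
  obtain ⟨s, hs, rfl⟩ := exists_sq_eq_of_norm_lt_one ht
  obtain ⟨ρ, hρ, rfl⟩ := exists_sq_eq_of_norm_lt_one hv
  exact regIntegral_succ_sq hq0 hq hσ hs hρ n

/-- The regularised evaluation, relative to the type I constant. -/
noncomputable def regValue (q t v : ℂ) (n : ℕ) : ℂ :=
  ∏ m ∈ Finset.range n,
    ap q t * ap q (q * t ^ (n - 1 + m) * v ^ 2) / (ap q (t ^ (n - m)) * stepFactor q (t ^ m * v))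

theorem norm_pow_le_one_of_lt {t : ℂ} (ht : ‖t‖ < 1) (m : ℕ) : ‖t ^ m‖ ≤ 1 := by
  rw [norm_pow]; exact pow_le_one₀ (norm_nonneg _) ht.le

theorem norm_pow_succ_lt {t : ℂ} (ht : ‖t‖ < 1) {m : ℕ} (hm : m ≠ 0) : ‖t ^ m‖ < 1 := by
  rw [norm_pow]; exact pow_lt_one₀ (norm_nonneg _) ht hm

theorem one_add_ne_zero_of_norm_lt {v : ℂ} (hv : ‖v‖ < 1) : 1 + v ≠ 0 := by
  intro h
  rw [← eq_neg_iff_add_eq_zero] at h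
  rw [← norm_neg, ← h, norm_one] at hv
  exact lt_irrefl _ hv

theorem regIntegral_eq {q t v : ℂ} (hq0 : q ≠ 0) (hq : ‖q‖ < 1) (ht : ‖t‖ < 1) (hv : ‖v‖ < 1)
    {n : ℕ} (hκ : ∀ m < n, typeOneConst q m ≠ 0) :
    regIntegral q t v n = typeOneConst q n * regValue q t v n := by
  induction n generalizing v with
  | zero =>
    have (θ : Fin 0 → ℝ) : regIntegrand q t v (torusPt θ) = 1 := by simp [regIntegrand, pairProd]
    simp [regIntegral, this, cubeMeasure, Measure.real, Measure.pi_empty_univ, typeOneConst,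
      typeOneIntegral_zero, regValue]
  | succ n ih =>
    have htv : ‖t * v‖ < 1 := norm_mul_lt_one ht hv.le
    have h := regIntegral_succ hq0 hq ht hv n
    rw [ih htv fun m hm => hκ m (by omega)] at h
    have h1 := hκ n (by omega)
    have h2 := ap_ne_zero hq (norm_pow_succ_lt ht n.succ_ne_zero)
    have h3 := stepFactor_ne_zero hq hv.le (one_add_ne_zero_of_norm_lt hv)
    have e : regValue q t v (n + 1) = regValue q t (t * v) n *
        (ap q t * ap q (q * t ^ n * v ^ 2) / (ap q (t ^ (n + 1)) * stepFactor q v)) := by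
      rw [regValue, Finset.prod_range_succ', regValue]
      congr 1
      · refine Finset.prod_congr rfl fun m hm => ?_
        have hm := Finset.mem_range.1 hm
        obtain ⟨k, rfl⟩ : ∃ k, n = k + 1 := ⟨n - 1, by omega⟩
        rw [show k + 1 + 1 - (m + 1) = k + 1 - m by omega]
        simp only [Nat.add_sub_cancel]
        congr 3
        · ring
        · rw [pow_succ]; ring
      · simp
    rw [e]
    generalize ap q (q * t ^ n * v ^ 2) = E at *
    generalize hF : ap q (t ^ (n + 1)) = F at *
    rw [← mul_assoc, ← mul_div_assoc, eq_div_iff (mul_ne_zero h2 h3)]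
    refine mul_left_cancel₀ h1 ?_
    linear_combination h

/-- The integral of the `D_n` weight. -/
noncomputable def weightIntegral (q t : ℂ) (n : ℕ) : ℂ :=
  ∫ θ : Fin n → ℝ, pairProd (quad q 1) (torusPt θ) / pairProd (quad q t) (torusPt θ) ∂cubeMeasure n

theorem norm_one_sub_le {v : ℝ} (hv0 : 0 ≤ v) (hv1 : v ≤ 1) {w : ℂ} (hw : ‖w‖ = 1) :
    ‖1 - w‖ ≤ 2 * ‖1 - v * w‖ := by
  have h1 : ‖(v * w : ℂ)‖ = v := by
    rw [norm_mul, hw, mul_one, Complex.norm_real, Real.norm_of_nonneg hv0]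
  have h2 : 1 - v ≤ ‖1 - v * w‖ := by
    have := norm_sub_norm_le (1 : ℂ) (v * w)
    rwa [norm_one, h1] at this
  have h3 : ‖((1 - v : ℝ) : ℂ) * w‖ = 1 - v := by
    rw [norm_mul, hw, mul_one, Complex.norm_real, Real.norm_of_nonneg (by linarith)]
  calc ‖1 - w‖ = ‖(1 - v * w) - ((1 - v : ℝ) : ℂ) * w‖ := by congr 1; push_cast; ring
    _ ≤ ‖1 - v * w‖ + ‖((1 - v : ℝ) : ℂ) * w‖ := norm_sub_le _ _
    _ ≤ 2 * ‖1 - v * w‖ := by linarith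

theorem ae_circlePt_sq_ne_one : ∀ᵐ t ∂angleMeasure, circlePt t ^ 2 ≠ 1 := by
  have h : {t : ℝ | circlePt t ^ 2 = 1} ⊆ range fun n : ℤ => n * Real.pi := by
    intro t ht
    rw [mem_ofPred_eq, circlePt, ← Complex.exp_nat_mul, Complex.exp_eq_one_iff] at ht
    obtain ⟨n, hn⟩ := ht
    refine ⟨n, ?_⟩
    have h2 : (2 * Complex.I) * t = (2 * Complex.I) * (n * Real.pi) := by
      push_cast at hn
      linear_combination hn
    exact_mod_cast (mul_left_cancel₀ (by simp) h2).symm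
  have h0 : volume {t : ℝ | circlePt t ^ 2 = 1} = 0 := ((countable_range _).mono h).measure_zero _
  exact ae_restrict_of_ae (measure_eq_zero_iff_ae_notMem.1 h0)

theorem ae_torusPt_sq_ne_one (n : ℕ) : ∀ᵐ θ ∂cubeMeasure n, ∀ i, torusPt θ i ^ 2 ≠ 1 :=
  ae_all_iff.2 fun i => (Measure.tendsto_eval_ae_ae (μ := fun _ : Fin n => angleMeasure)
    (i := i)).eventually ae_circlePt_sq_ne_one

theorem continuous_weight {X : Type*} [TopologicalSpace X] {q t : ℂ} (hq : ‖q‖ < 1) (ht : ‖t‖ < 1)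
    {n : ℕ} {f : X → Fin n → ℂ} (hf : ∀ i, Continuous fun x => f x i) (h1 : ∀ x i, ‖f x i‖ = 1) :
    Continuous fun x => pairProd (quad q 1) (f x) / pairProd (quad q t) (f x) := by
  have h0 (x i) : f x i ≠ 0 := norm_ne_zero_iff.1 (by rw [h1]; exact one_ne_zero)
  refine (continuous_pairProd fun i j => ?_).div (continuous_pairProd fun i j => ?_)
    fun x => pairProd_ne_zero fun i j => quad_ne_zero hq ht (h1 x i) (h1 x j)
  all_goals exact continuous_quad hq continuous_const (hf i) (hf j) (h0 · i) (h0 · j)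

theorem tendsto_regIntegral {q t : ℂ} (hq : ‖q‖ < 1) (ht : ‖t‖ < 1) (n : ℕ) :
    Tendsto (fun v : ℝ => regIntegral q t v n) (𝓝[<] 1) (𝓝 (weightIntegral q t n)) := by
  let E (v : ℝ) (θ : Fin n → ℝ) : ℂ :=
    pairProd (quad q 1) (torusPt θ) / pairProd (quad q t) (torusPt θ) *
      ∏ i, ap q (q * torusPt θ i ^ 2) * ap q (q * (torusPt θ i)⁻¹ ^ 2) /
        (ap q (q * (v * torusPt θ i ^ 2)) * ap q (q * (v * (torusPt θ i)⁻¹ ^ 2)))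
  let R (v : ℝ) (θ : Fin n → ℝ) : ℂ :=
    ∏ i, (1 - torusPt θ i ^ 2) / (1 - v * torusPt θ i ^ 2) *
      ((1 - (torusPt θ i)⁻¹ ^ 2) / (1 - v * (torusPt θ i)⁻¹ ^ 2))
  have hER (v : ℝ) (θ : Fin n → ℝ) : regIntegrand q t v (torusPt θ) = E v θ * R v θ := by
    simp only [regIntegrand, E, R]
    rw [mul_assoc, ← Finset.prod_mul_distrib]
    congr 1
    refine Finset.prod_congr rfl fun i _ => ?_
    rw [ap_eq hq (torusPt θ i ^ 2), ap_eq hq ((torusPt θ i)⁻¹ ^ 2), ap_eq hq (v * torusPt θ i ^ 2),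
      ap_eq hq (v * (torusPt θ i)⁻¹ ^ 2)]
    simp only [div_eq_mul_inv, mul_inv]
    ring
  have hden {v : ℝ} (hv0 : 0 ≤ v) (hv1 : v ≤ 1) (u : ℂ) (hu : ‖u‖ = 1) : ap q (q * (v * u)) ≠ 0 :=
    ap_mul_ne_zero hq hq (by
      rw [norm_mul, hu, mul_one, Complex.norm_real, Real.norm_of_nonneg hv0]; exact hv1)
  have hE : Continuous (Function.uncurry fun (v : Icc (0 : ℝ) 1) => E v) := by
    have hap {e : Icc (0 : ℝ) 1 × (Fin n → ℝ) → ℂ} (he : Continuous e) := continuous_ap_comp hq he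
    refine (continuous_weight hq ht (by fun_prop) (by simp)).mul
      (continuous_finsetProd _ fun i _ => ?_)
    refine ((hap (by fun_prop)).mul (hap (by fun_prop (disch := simp)))).div
      ((hap (by fun_prop)).mul (hap (by fun_prop (disch := simp)))) fun p => ?_
    exact mul_ne_zero (hden p.1.2.1 p.1.2.2 _ (by simp)) (hden p.1.2.1 p.1.2.2 _ (by simp))
  obtain ⟨M, hM⟩ := ((isCompact_univ (X := Icc (0 : ℝ) 1)).prod
    (isCompact_cube n)).exists_bound_of_continuousOn hE.continuousOn
  have hMR : ∀ v ∈ Ico (0 : ℝ) 1, ∀ θ, ‖R v θ‖ ≤ 4 ^ n := by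
    intro v hv θ
    have hb (u : ℂ) (hu : ‖u‖ = 1) : ‖(1 - u) / (1 - v * u)‖ ≤ 2 := by
      rw [norm_div]
      exact div_le_of_le_mul₀ (norm_nonneg _) zero_le_two (norm_one_sub_le hv.1 hv.2.le hu)
    rw [norm_prod]
    refine (Finset.prod_le_prod (g := fun _ => 4) (fun i _ => norm_nonneg _) fun i _ => ?_).trans
      (by simp)
    rw [norm_mul]
    nlinarith [hb (torusPt θ i ^ 2) (by simp), hb ((torusPt θ i)⁻¹ ^ 2) (by simp),
      norm_nonneg ((1 - torusPt θ i ^ 2) / (1 - v * torusPt θ i ^ 2)),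
      norm_nonneg ((1 - (torusPt θ i)⁻¹ ^ 2) / (1 - v * (torusPt θ i)⁻¹ ^ 2))]
  have hev : ∀ᶠ v : ℝ in 𝓝[<] 1, v ∈ Ico (0 : ℝ) 1 := Ico_mem_nhdsLT one_pos
  have hcv {v : ℝ} (hv : v ∈ Ico (0 : ℝ) 1) :
      Continuous fun θ : Fin n → ℝ => regIntegrand q t v (torusPt θ) := by
    have hap {e : (Fin n → ℝ) → ℂ} (he : Continuous e) := continuous_ap_comp hq he
    have hv1 : ‖(v : ℂ)‖ < 1 := by
      rw [Complex.norm_real, Real.norm_of_nonneg hv.1]; exact hv.2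
    refine (continuous_weight hq ht (by fun_prop) (by simp)).mul
      (continuous_finsetProd _ fun i _ => ?_)
    refine ((hap (by fun_prop)).mul (hap (by fun_prop (disch := simp)))).div
      ((hap (by fun_prop)).mul (hap (by fun_prop (disch := simp)))) fun p => ?_
    exact mul_ne_zero (ap_mul_ne_zero hq hv1 (by simp)) (ap_mul_ne_zero hq hv1 (by simp))
  unfold regIntegral weightIntegral
  refine tendsto_integral_filter_of_dominated_convergence (fun _ => M * 4 ^ n)
    (hev.mono fun v hv => (hcv hv).aestronglyMeasurable) (hev.mono fun v hv => ?_)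
    (integrable_const _) ?_
  · rw [cubeMeasure_eq]
    filter_upwards [ae_restrict_mem (isCompact_cube n).measurableSet] with θ hθ
    rw [hER, norm_mul]
    have h1 := hM (⟨v, hv.1, hv.2.le⟩, θ) ⟨mem_univ _, hθ⟩
    exact mul_le_mul h1 (hMR v hv θ) (norm_nonneg _) ((norm_nonneg _).trans h1)
  · filter_upwards [ae_torusPt_sq_ne_one n] with θ hθ
    have hθ' (i) : (torusPt θ i)⁻¹ ^ 2 ≠ 1 := by
      rw [inv_pow, Ne, inv_eq_one]; exact hθ i
    have h1 : regIntegrand q t (1 : ℝ) (torusPt θ) =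
        pairProd (quad q 1) (torusPt θ) / pairProd (quad q t) (torusPt θ) := by
      rw [hER]
      simp only [E, R, Complex.ofReal_one, one_mul]
      rw [Finset.prod_eq_one, Finset.prod_eq_one, mul_one, mul_one]
      · intro i _
        rw [div_self (sub_ne_zero.2 (hθ i).symm), div_self (sub_ne_zero.2 (hθ' i).symm), one_mul]
      · intro i _
        have h (u : ℂ) (hu : ‖u‖ = 1) : ap q (q * u) ≠ 0 := ap_mul_ne_zero hq hq hu.le
        exact div_self (mul_ne_zero (h _ (by simp)) (h _ (by simp)))
    rw [← h1]
    have hc : ContinuousAt (fun v : ℝ => regIntegrand q t v (torusPt θ)) 1 := by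
      have hap {e : ℝ → ℂ} (he : Continuous e) := (continuous_ap_comp hq he).continuousAt (x := 1)
      refine continuousAt_const.mul (tendsto_finsetProd _ fun i _ => ?_)
      refine ContinuousAt.div continuousAt_const ((hap (by fun_prop)).mul (hap (by fun_prop))) ?_
      have h (u : ℂ) (hu : ‖u‖ = 1) (hu1 : u ≠ 1) : ap q ((1 : ℝ) * u) ≠ 0 := by
        rw [Complex.ofReal_one, one_mul, ap_eq hq]
        exact mul_ne_zero (sub_ne_zero.2 hu1.symm) (ap_mul_ne_zero hq hq hu.le)
      exact mul_ne_zero (h _ (by simp) (hθ i)) (h _ (by simp) (hθ' i))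
    exact hc.tendsto.mono_left nhdsWithin_le_nhds

theorem continuousAt_stepFactor {q u : ℂ} (hq : ‖q‖ < 1) (hu : ‖u‖ ≤ 1) :
    ContinuousAt (stepFactor q) u := by
  have hap {e : ℂ → ℂ} (he : Continuous e) := (continuous_ap_comp hq he).continuousAt (x := u)
  exact ContinuousAt.mul (by fun_prop) (((hap (by fun_prop)).div (hap (by fun_prop))
    (ap_mul_ne_zero hq hq hu)).pow 2)

theorem weightIntegral_eq {q t : ℂ} (hq0 : q ≠ 0) (hq : ‖q‖ < 1) (ht : ‖t‖ < 1)
    {n : ℕ} (hκ : ∀ m < n, typeOneConst q m ≠ 0) :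
    weightIntegral q t n = typeOneConst q n * regValue q t 1 n := by
  have hev : ∀ᶠ v : ℝ in 𝓝[<] 1, v ∈ Ico (0 : ℝ) 1 := Ico_mem_nhdsLT one_pos
  refine tendsto_nhds_unique ((tendsto_regIntegral hq ht n).congr' (hev.mono fun v hv =>
    regIntegral_eq hq0 hq ht ?_ hκ)) (tendsto_const_nhds.mul ?_)
  · rw [Complex.norm_real, Real.norm_of_nonneg hv.1]; exact hv.2
  have h : ContinuousAt (fun v : ℂ => regValue q t v n) 1 := by
    have hap {e : ℂ → ℂ} (he : Continuous e) := (continuous_ap_comp hq he).continuousAt (x := 1)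
    refine tendsto_finsetProd _ fun m hm => ?_
    have hm := Finset.mem_range.1 hm
    have htm : ‖t ^ m * 1‖ ≤ 1 := by rw [mul_one]; exact norm_pow_le_one_of_lt ht m
    have hs : ContinuousAt (fun v : ℂ => stepFactor q (t ^ m * v)) 1 :=
      (continuousAt_stepFactor hq htm).comp (f := fun v : ℂ => t ^ m * v) (by fun_prop)
    refine ContinuousAt.div (continuousAt_const.mul (hap (by fun_prop)))
      (continuousAt_const.mul hs) (mul_ne_zero (ap_ne_zero hq (norm_pow_succ_lt ht (by omega)))
        (stepFactor_ne_zero hq htm ?_))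
    obtain rfl | hm0 := eq_or_ne m 0
    · norm_num
    · rw [mul_one]; exact one_add_ne_zero_of_norm_lt (norm_pow_succ_lt ht hm0)
  have h2 := h.tendsto.comp
    ((Complex.continuous_ofReal.tendsto' 1 1 Complex.ofReal_one).mono_left
      (nhdsWithin_le_nhds (s := Iio (1 : ℝ))))
  exact h2

theorem prod_range_two_mul {M : Type*} [CommMonoid M] (f : ℕ → M) (n : ℕ) :
    ∏ j ∈ Finset.range (2 * n), f j = ∏ j ∈ Finset.range n, f (2 * j) * f (2 * j + 1) := by
  induction n with
  | zero => simp
  | succ n ih =>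
    rw [show 2 * (n + 1) = 2 * n + 1 + 1 by ring, Finset.prod_range_succ, Finset.prod_range_succ,
      ih, Finset.prod_range_succ, mul_assoc]

theorem regValue_one {q t : ℂ} (hq : ‖q‖ < 1) (ht : ‖t‖ < 1) (n : ℕ) :
    regValue q t 1 (n + 1) = ap q t ^ (n + 1) / 2 * ((ap q (q * t ^ n) / ap q (t ^ (n + 1))) *
      ∏ j ∈ Finset.range n, ap q (q * t ^ (2 * j + 1)) / ap q (t ^ (2 * j + 2))) := by
  have hA (m : ℕ) : ap q (t ^ (m + 1)) ≠ 0 := ap_ne_zero hq (norm_pow_succ_lt ht m.succ_ne_zero)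
  have hB (m : ℕ) : ap q (q * t ^ m) ≠ 0 := ap_mul_ne_zero hq hq (norm_pow_le_one_of_lt ht m)
  have hstep (m : ℕ) : stepFactor q (t ^ (m + 1)) = ap q (t ^ (2 * m + 2)) *
      ap q (q * t ^ (2 * m + 2)) / (ap q (t ^ (m + 1)) * ap q (q * t ^ (m + 1))) := by
    rw [eq_div_iff (mul_ne_zero (hA m) (hB _)),
      stepFactor_mul hq (norm_pow_succ_lt ht m.succ_ne_zero), ← pow_mul,
      show (m + 1) * 2 = 2 * m + 2 by ring]
  have hstep0 : stepFactor q 1 = 2 := by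
    rw [stepFactor, one_pow, div_self (by simpa using hB 0)]; norm_num
  unfold regValue
  simp only [Nat.add_sub_cancel, one_pow, mul_one]
  rw [Finset.prod_div_distrib, Finset.prod_mul_distrib, Finset.prod_const, Finset.card_range,
    Finset.prod_mul_distrib]
  have e1 : ∏ m ∈ Finset.range (n + 1), ap q (t ^ (n + 1 - m)) =
      ∏ m ∈ Finset.range (n + 1), ap q (t ^ (m + 1)) := by
    rw [← Finset.prod_range_reflect]
    refine Finset.prod_congr rfl fun m hm => ?_
    have := Finset.mem_range.1 hm
    congr 2
    omega
  have e2 : ∏ m ∈ Finset.range (n + 1), stepFactor q (t ^ m) =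
      (∏ m ∈ Finset.range n, ap q (t ^ (2 * m + 2)) * ap q (q * t ^ (2 * m + 2)) /
        (ap q (t ^ (m + 1)) * ap q (q * t ^ (m + 1)))) * 2 := by
    rw [Finset.prod_range_succ', pow_zero, hstep0]
    simp only [hstep]
  have e3 : (∏ m ∈ Finset.range (n + 1), ap q (q * t ^ (n + m))) *
      ∏ m ∈ Finset.range n, ap q (q * t ^ (m + 1)) = ap q (q * t ^ n) *
        ∏ m ∈ Finset.range n, ap q (q * t ^ (2 * m + 1)) * ap q (q * t ^ (2 * m + 2)) := by
    have h1 := prod_range_two_mul (fun j => ap q (q * t ^ (j + 1))) n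
    simp only [add_assoc, Nat.reduceAdd] at h1
    rw [two_mul, Finset.prod_range_add] at h1
    rw [← h1, Finset.prod_range_succ']
    simp only [add_zero, ← add_assoc]
    ring
  rw [e1, e2, Finset.prod_range_succ (fun m => ap q (t ^ (m + 1)))]
  simp only [Finset.prod_div_distrib, Finset.prod_mul_distrib] at e3 ⊢
  have hP {f : ℕ → ℂ} (h : ∀ m, f m ≠ 0) : ∏ m ∈ Finset.range n, f m ≠ 0 :=
    Finset.prod_ne_zero_iff.2 fun m _ => h m
  have h1 := hP fun m => hA m
  have h2 := hP fun m => hB (m + 1)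
  have h3 := hP fun m => hA (2 * m + 1)
  have h4 := hP fun m => hB (2 * m + 2)
  have h5 := hA n
  generalize (∏ m ∈ Finset.range n, ap q (t ^ (m + 1))) = P1 at *
  generalize (∏ m ∈ Finset.range n, ap q (q * t ^ (m + 1))) = P2 at *
  generalize (∏ m ∈ Finset.range n, ap q (t ^ (2 * m + 2))) = P3 at *
  generalize (∏ m ∈ Finset.range n, ap q (q * t ^ (2 * m + 2))) = P4 at *
  generalize (∏ m ∈ Finset.range n, ap q (q * t ^ (2 * m + 1))) = P5 at *
  generalize (∏ m ∈ Finset.range (n + 1), ap q (q * t ^ (n + m))) = P6 at *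
  generalize ap q (t ^ (n + 1)) = P7 at *
  generalize ap q (q * t ^ n) = P8 at *
  field_simp
  linear_combination ap q t ^ (n + 1) * e3

theorem integral_circlePt_zpow {k : ℤ} (hk : k ≠ 0) : ∫ t, circlePt t ^ k ∂angleMeasure = 0 := by
  have hc : (k * Complex.I : ℂ) ≠ 0 := mul_ne_zero (by exact_mod_cast hk) Complex.I_ne_zero
  have h (t : ℝ) : circlePt t ^ k = Complex.exp (k * Complex.I * t) := by
    rw [circlePt, ← Complex.exp_int_mul]
    congr 1
    ring
  simp only [integral_angle, h]
  rw [integral_exp_mul_complex hc, div_eq_zero_iff]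
  left
  rw [Complex.ofReal_zero, mul_zero, Complex.exp_zero, sub_eq_zero, Complex.exp_eq_one_iff]
  exact ⟨k, by push_cast; ring⟩

/-- The monic polynomials in `x + x⁻¹` that are orthogonal on the circle. -/
noncomputable def cosPoly (k : ℕ) : Polynomial ℂ :=
  if k = 0 then 1 else Polynomial.dickson 1 1 k

theorem monic_dickson_one_one (k : ℕ) :
    ((Polynomial.dickson 1 (1 : ℂ) (k + 1)).Monic ∧
      (Polynomial.dickson 1 (1 : ℂ) (k + 1)).natDegree = k + 1) ∧
      (Polynomial.dickson 1 (1 : ℂ) k).natDegree ≤ k := by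
  induction k with
  | zero =>
    rw [zero_add, Polynomial.dickson_one]
    refine ⟨⟨Polynomial.monic_X, Polynomial.natDegree_X⟩, ?_⟩
    rw [Polynomial.dickson_zero]
    norm_num
  | succ k ih =>
    obtain ⟨⟨h1, h2⟩, h3⟩ := ih
    have hX : (Polynomial.X * Polynomial.dickson 1 (1 : ℂ) (k + 1)).natDegree = k + 1 + 1 := by
      rw [Polynomial.natDegree_X_mul h1.ne_zero, h2]
    have hlt : (Polynomial.dickson 1 (1 : ℂ) k).natDegree <
        (Polynomial.X * Polynomial.dickson 1 (1 : ℂ) (k + 1)).natDegree := by omega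
    have hXm := Polynomial.monic_X.mul h1
    refine ⟨?_, h2.le⟩
    rw [Polynomial.dickson_add_two, map_one, one_mul]
    refine ⟨hXm.sub_of_left ?_, ?_⟩
    · exact Polynomial.degree_lt_degree hlt
    · rw [Polynomial.natDegree_sub_eq_left_of_natDegree_lt hlt, hX]

theorem monic_cosPoly (k : ℕ) : (cosPoly k).Monic := by
  cases k with
  | zero => exact Polynomial.monic_one
  | succ k => exact (monic_dickson_one_one k).1.1

theorem natDegree_cosPoly (k : ℕ) : (cosPoly k).natDegree = k := by
  cases k with
  | zero => exact Polynomial.natDegree_one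
  | succ k => exact (monic_dickson_one_one k).1.2

theorem eval_cosPoly {x : ℂ} (hx : x ≠ 0) (k : ℕ) :
    (cosPoly k).eval (x + x⁻¹) = if k = 0 then 1 else x ^ (k : ℤ) + x ^ (-k : ℤ) := by
  unfold cosPoly
  split_ifs with h
  · exact Polynomial.eval_one
  · rw [Polynomial.dickson_one_one_eval_add_inv x x⁻¹ (mul_inv_cancel₀ hx)]
    simp

theorem integrable_circlePt_zpow (k : ℤ) : Integrable (fun t => circlePt t ^ k) angleMeasure :=
  (Continuous.zpow₀ (by fun_prop) k fun t => Or.inl (circlePt_ne_zero t)).continuousOn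
    |>.integrableOn_compact isCompact_Icc

theorem integral_cosPoly_mul (j k : ℕ) :
    ∫ t, (cosPoly j).eval (circlePt t + (circlePt t)⁻¹) *
      (cosPoly k).eval (circlePt t + (circlePt t)⁻¹) ∂angleMeasure =
      if j = k then (if j = 0 then 2 * (Real.pi : ℂ) else 2 * (2 * Real.pi)) else 0 := by
  have hm (m : ℤ) : ∫ t, circlePt t ^ m ∂angleMeasure = if m = 0 then 2 * (Real.pi : ℂ) else 0 := by
    split_ifs with h
    · rw [h, integral_angle]; simp
    · exact integral_circlePt_zpow h
  have hi := integrable_circlePt_zpow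
  simp only [eval_cosPoly (circlePt_ne_zero _)]
  by_cases hj : j = 0 <;> by_cases hk : k = 0 <;>
    simp only [hj, hk, if_true, if_false, one_mul, mul_one]
  · simpa using hm 0
  · rw [integral_add (hi _) (hi _), hm, hm, if_neg (by omega), if_neg (by omega),
      if_neg (by omega), add_zero]
  · rw [integral_add (hi _) (hi _), hm, hm, if_neg (by omega), if_neg (by omega), add_zero]
  · simp only [add_mul, mul_add, ← zpow_add₀ (circlePt_ne_zero _)]
    rw [integral_add (f := fun t => _ + _) (g := fun t => _ + _) ((hi _).add (hi _))
      ((hi _).add (hi _)), integral_add (hi _) (hi _), integral_add (hi _) (hi _),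
      hm, hm, hm, hm, if_neg (by omega : ¬ (j + k : ℤ) = 0),
      if_neg (by omega : ¬ (-j + -k : ℤ) = 0)]
    by_cases h : j = k
    · rw [if_pos (by omega), if_pos (by omega), if_pos h]; ring
    · rw [if_neg (by omega), if_neg (by omega), if_neg h]; ring

theorem integral_sq_det {n : ℕ} (f : Fin n → ℝ → ℂ) (hf : ∀ i, Continuous (f i))
    (hort : ∀ j k, j ≠ k → ∫ t, f j t * f k t ∂angleMeasure = 0) :
    ∫ θ, (Matrix.of fun i j => f j (θ i)).det ^ 2 ∂cubeMeasure n =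
      n.factorial * ∏ i, ∫ t, f i t ^ 2 ∂angleMeasure := by
  have hdet (θ : Fin n → ℝ) : (Matrix.of fun i j => f j (θ i)).det =
      ∑ σ : Equiv.Perm (Fin n), ((Equiv.Perm.sign σ : ℤ) : ℂ) * ∏ i, f (σ i) (θ i) := by
    rw [← Matrix.det_transpose, Matrix.det_apply']
    rfl
  simp only [hdet, sq, Finset.sum_mul_sum]
  have hsum (σ τ : Equiv.Perm (Fin n)) : Integrable (fun θ : Fin n → ℝ =>
      ((Equiv.Perm.sign σ : ℤ) : ℂ) * (∏ i, f (σ i) (θ i)) *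
        (((Equiv.Perm.sign τ : ℤ) : ℂ) * ∏ i, f (τ i) (θ i))) (cubeMeasure n) := by
    refine integrable_cube ?_
    have h (σ : Equiv.Perm (Fin n)) : Continuous fun θ : Fin n → ℝ => ∏ i, f (σ i) (θ i) :=
      continuous_finsetProd _ fun i _ => (hf _).comp (continuous_apply i)
    have := h σ
    have := h τ
    fun_prop
  have hval (σ τ : Equiv.Perm (Fin n)) : ∫ θ : Fin n → ℝ,
      ((Equiv.Perm.sign σ : ℤ) : ℂ) * (∏ i, f (σ i) (θ i)) *
        (((Equiv.Perm.sign τ : ℤ) : ℂ) * ∏ i, f (τ i) (θ i)) ∂cubeMeasure n =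
      if σ = τ then ∏ i, ∫ t, f i t * f i t ∂angleMeasure else 0 := by
    have h1 (θ : Fin n → ℝ) : ((Equiv.Perm.sign σ : ℤ) : ℂ) * (∏ i, f (σ i) (θ i)) *
        (((Equiv.Perm.sign τ : ℤ) : ℂ) * ∏ i, f (τ i) (θ i)) =
        ((Equiv.Perm.sign σ * Equiv.Perm.sign τ : ℤ) : ℂ) *
          ∏ i, (fun i t => f (σ i) t * f (τ i) t) i (θ i) := by
      rw [Finset.prod_mul_distrib]
      push_cast
      ring
    simp only [h1]
    rw [integral_const_mul, cubeMeasure, integral_fintype_prod_eq_prod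
      (fun i t => f (σ i) t * f (τ i) t)]
    split_ifs with h
    · subst h
      rw [Equiv.prod_comp σ fun i => ∫ t, f i t * f i t ∂angleMeasure,
        show (Equiv.Perm.sign σ * Equiv.Perm.sign σ : ℤ) = 1 by
          rw [← Units.val_mul, Int.units_mul_self, Units.val_one]]
      simp
    · obtain ⟨i, hi⟩ := not_forall.1 (mt Equiv.ext h)
      rw [Finset.prod_eq_zero (Finset.mem_univ i) (hort _ _ hi), mul_zero]
  rw [integral_finsetSum _ fun σ _ => integrable_finsetSum _ fun τ _ => hsum σ τ]
  simp only [integral_finsetSum _ fun τ _ => hsum _ τ, hval, Finset.sum_ite_eq,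
    Finset.mem_univ, if_true, Finset.sum_const, Finset.card_univ, Fintype.card_perm,
    Fintype.card_fin, nsmul_eq_mul]

theorem quad_one_eq {q x y : ℂ} (hq : ‖q‖ < 1) (hx : x ≠ 0) (hy : y ≠ 0) :
    quad q 1 x y = ((y + y⁻¹) - (x + x⁻¹)) ^ 2 * quad q q x y := by
  unfold quad
  simp only [one_mul]
  rw [ap_eq hq (x * y), ap_eq hq (x * y⁻¹), ap_eq hq (x⁻¹ * y), ap_eq hq (x * y)⁻¹]
  have h : (1 - x * y) * (1 - x * y⁻¹) * (1 - x⁻¹ * y) * (1 - (x * y)⁻¹) =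
      ((y + y⁻¹) - (x + x⁻¹)) ^ 2 := by
    field_simp
    ring
  rw [← h]
  ring

theorem weight_self_eq {q : ℂ} (hq : ‖q‖ < 1) {n : ℕ} (θ : Fin n → ℝ) :
    pairProd (quad q 1) (torusPt θ) / pairProd (quad q q) (torusPt θ) =
      (Matrix.of fun i j : Fin n =>
        (cosPoly j).eval (circlePt (θ i) + (circlePt (θ i))⁻¹)).det ^ 2 := by
  rw [← Matrix.det_eval_matrixOfPolynomials_eq_det_vandermonde
    (fun i => circlePt (θ i) + (circlePt (θ i))⁻¹) (fun j => cosPoly j)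
    (fun i => natDegree_cosPoly i) (fun i => monic_cosPoly i), Matrix.det_vandermonde,
    div_eq_iff (pairProd_ne_zero fun i j => quad_ne_zero hq hq (by simp) (by simp))]
  unfold pairProd
  simp only [quad_one_eq hq (torusPt_ne_zero _ _) (torusPt_ne_zero _ _), Finset.prod_mul_distrib,
    Finset.prod_pow]
  congr 2
  refine Finset.prod_congr rfl fun i _ => Finset.prod_congr ?_ fun j _ => rfl
  ext j
  simp

theorem weightIntegral_self {q : ℂ} (hq : ‖q‖ < 1) (n : ℕ) :
    weightIntegral q q (n + 1) =
      (n + 1).factorial * ((2 * (Real.pi : ℂ)) ^ (n + 1) * 2 ^ n) := by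
  unfold weightIntegral
  simp only [weight_self_eq hq]
  rw [integral_sq_det (fun j t => (cosPoly j).eval (circlePt t + (circlePt t)⁻¹))]
  · simp only [sq, integral_cosPoly_mul, if_true]
    rw [Fin.prod_univ_succ]
    simp only [Fin.val_zero, if_true, Fin.val_succ, Nat.add_eq_zero_iff, one_ne_zero, and_false,
      if_false, Finset.prod_const, Finset.card_univ, Fintype.card_fin, mul_pow]
    ring
  · intro i
    exact (cosPoly i).continuous.comp
      (continuous_circlePt.add (continuous_circlePt.inv₀ circlePt_ne_zero))
  · intro j k hjk
    rw [integral_cosPoly_mul, if_neg fun h => hjk (Fin.ext h)]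

theorem regValue_self {q : ℂ} (hq : ‖q‖ < 1) (n : ℕ) :
    regValue q q 1 (n + 1) = ap q q ^ (n + 1) / 2 := by
  have h (m : ℕ) : ap q (q ^ (m + 1)) ≠ 0 := ap_ne_zero hq (norm_pow_succ_lt hq m.succ_ne_zero)
  rw [regValue_one hq hq, ← pow_succ', div_self (h n), Finset.prod_eq_one, mul_one, mul_one]
  intro j _
  rw [← pow_succ', div_self (h _)]

theorem typeOneConst_ne_zero {q : ℂ} (hq0 : q ≠ 0) (hq : ‖q‖ < 1) (n : ℕ) :
    typeOneConst q n ≠ 0 := by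
  induction n using Nat.strong_induction_on with
  | _ n ih =>
    cases n with
    | zero => rw [typeOneConst, typeOneIntegral_zero]; exact one_ne_zero
    | succ n =>
      intro h0
      have h := weightIntegral_eq hq0 hq hq ih
      rw [weightIntegral_self hq, h0, zero_mul] at h
      have : (2 * (Real.pi : ℂ)) ≠ 0 := by simp [Real.pi_ne_zero]
      exact mul_ne_zero (Nat.cast_ne_zero.2 (Nat.factorial_ne_zero _))
        (mul_ne_zero (pow_ne_zero _ this) (pow_ne_zero _ two_ne_zero)) h

theorem weightIntegral_value {q t : ℂ} (hq0 : q ≠ 0) (hq : ‖q‖ < 1) (ht : ‖t‖ < 1) (n : ℕ) :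
    ap q q ^ (n + 1) * weightIntegral q t (n + 1) =
      (n + 1).factorial * ((2 * (Real.pi : ℂ)) ^ (n + 1) * 2 ^ n) * (ap q t ^ (n + 1) *
        ((ap q (q * t ^ n) / ap q (t ^ (n + 1))) *
          ∏ j ∈ Finset.range n, ap q (q * t ^ (2 * j + 1)) / ap q (t ^ (2 * j + 2)))) := by
  have hκ (m : ℕ) (_ : m < n + 1) := typeOneConst_ne_zero hq0 hq m
  have h1 := weightIntegral_eq hq0 hq hq hκ
  rw [weightIntegral_self hq, regValue_self hq] at h1
  rw [weightIntegral_eq hq0 hq ht hκ, regValue_one hq ht, h1]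
  ring

theorem continuous_weightIntegral {t : ℂ} (ht : ‖t‖ < 1) (n : ℕ) :
    Continuous fun q : UnitDisc => weightIntegral q t n := by
  unfold weightIntegral
  refine continuous_integral_cube ?_
  unfold Function.uncurry
  have hquad {c : ℂ} (i j : Fin n) : Continuous fun p : UnitDisc × (Fin n → ℝ) =>
      quad p.1 c (torusPt p.2 i) (torusPt p.2 j) := by
    have hap {e : UnitDisc × (Fin n → ℝ) → ℂ} (he : Continuous e) :
        Continuous fun p => ap (p.1 : ℂ) (e p) :=
      Continuous.ap (by fun_prop) he fun p => p.1.norm_lt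
    unfold quad
    exact (((hap (by fun_prop)).mul (hap (by fun_prop (disch := simp)))).mul
      (hap (by fun_prop (disch := simp)))).mul (hap (by fun_prop (disch := simp)))
  exact (continuous_pairProd hquad).div (continuous_pairProd hquad)
    fun p => pairProd_ne_zero fun i j => quad_ne_zero p.1.norm_lt ht (by simp) (by simp)

theorem weightIntegral_value_of_norm_lt {q t : ℂ} (hq : ‖q‖ < 1) (ht : ‖t‖ < 1) (n : ℕ) :
    ap q q ^ (n + 1) * weightIntegral q t (n + 1) =
      (n + 1).factorial * ((2 * (Real.pi : ℂ)) ^ (n + 1) * 2 ^ n) * (ap q t ^ (n + 1) *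
        ((ap q (q * t ^ n) / ap q (t ^ (n + 1))) *
          ∏ j ∈ Finset.range n, ap q (q * t ^ (2 * j + 1)) / ap q (t ^ (2 * j + 2)))) := by
  have hap {e : UnitDisc → ℂ} (he : Continuous e) :
      Continuous fun q : UnitDisc => ap (q : ℂ) (e q) :=
    Continuous.ap (by fun_prop) he fun p => p.norm_lt
  have hne (q : UnitDisc) (m : ℕ) : ap (q : ℂ) (t ^ (m + 1)) ≠ 0 :=
    ap_ne_zero q.norm_lt (norm_pow_succ_lt ht m.succ_ne_zero)
  have hL : Continuous fun q : UnitDisc => ap (q : ℂ) q ^ (n + 1) * weightIntegral q t (n + 1) :=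
    ((hap (by fun_prop)).pow _).mul (continuous_weightIntegral ht _)
  have hR : Continuous fun q : UnitDisc =>
      (n + 1).factorial * ((2 * (Real.pi : ℂ)) ^ (n + 1) * 2 ^ n) * (ap (q : ℂ) t ^ (n + 1) *
        ((ap (q : ℂ) (q * t ^ n) / ap (q : ℂ) (t ^ (n + 1))) *
          ∏ j ∈ Finset.range n,
            ap (q : ℂ) (q * t ^ (2 * j + 1)) / ap (q : ℂ) (t ^ (2 * j + 2)))) :=
    continuous_const.mul (((hap (by fun_prop)).pow _).mul
      (((hap (by fun_prop)).div (hap (by fun_prop)) fun q => hne q n).mul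
        (continuous_finsetProd _ fun j _ =>
          (hap (by fun_prop)).div (hap (by fun_prop)) fun q => hne q (2 * j + 1))))
  have hdense : Dense {q : UnitDisc | (q : ℂ) ≠ 0} := by
    have h := (dense_compl_singleton (0 : ℂ)).open_subset_closure_inter
      (Metric.isOpen_ball (x := (0 : ℂ)) (ε := 1))
    refine Subtype.dense_iff.2 fun x hx => ?_
    refine closure_mono ?_ (h hx)
    rintro y ⟨hy, hy0⟩
    exact ⟨⟨y, hy⟩, hy0, rfl⟩
  exact congrFun (hL.ext_on hdense hR fun q hq0 => weightIntegral_value hq0 q.norm_lt ht n)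
    ⟨q, by simpa using hq⟩

theorem prod_pochRatio_eq (q t : ℂ) {n : ℕ} (x : Fin n → ℂ) :
    ∏ i, ∏ j ∈ Finset.univ.filter (fun j => i < j),
      pochRatio q t (x i * x j) * pochRatio q t (x i * (x j)⁻¹) *
        pochRatio q t ((x i)⁻¹ * x j) * pochRatio q t ((x i * x j)⁻¹) =
      pairProd (quad q 1) x / pairProd (quad q t) x := by
  unfold pairProd quad pochRatio
  simp only [← Finset.prod_div_distrib, one_mul, div_mul_div_comm]

end

/-- the multivariable Askey–Wilson (q-Selberg) integral evaluation for the
`D_N` weight: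
`((q;q)_∞^N/(t;q)_∞^N) (1/(2^{N−1} N!)) ∮_{T^N} ∏_{i<j} (x_i^{±1}x_j^{±1};q)_∞/(t x_i^{±1}x_j^{±1};q)_∞ ∏_j dx_j/(2πi x_j)
 = ((q t^{N−1};q)_∞/(t^N;q)_∞) ∏_{j=0}^{N−2} (q t^{2j+1};q)_∞/(t^{2j+2};q)_∞`. -/
theorem gustafson_DN (N : ℕ) (hN : 0 < N) (q t : ℂ) (hq : ‖q‖ < 1) (ht : ‖t‖ < 1) :
    ((ap q q) ^ N / (ap q t) ^ N) * (1 / (2 ^ (N - 1) * (N.factorial : ℂ))) *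
      (1 / (2 * (Real.pi : ℂ)) ^ N) *
      ∫ θ in Set.univ.pi (fun _ : Fin N => Set.Ioc (0 : ℝ) (2 * Real.pi)),
        ∏ i : Fin N, ∏ j ∈ Finset.univ.filter (fun j => i < j),
          pochRatio q t (torusPt θ i * torusPt θ j) *
            pochRatio q t (torusPt θ i * (torusPt θ j)⁻¹) *
            pochRatio q t ((torusPt θ i)⁻¹ * torusPt θ j) *
            pochRatio q t ((torusPt θ i * torusPt θ j)⁻¹) =
      (ap q (q * t ^ (N - 1)) / ap q (t ^ N)) *
        ∏ j ∈ Finset.range (N - 1), ap q (q * t ^ (2 * j + 1)) / ap q (t ^ (2 * j + 2)) := by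
  obtain ⟨n, rfl⟩ := Nat.exists_eq_succ_of_ne_zero hN.ne'
  simp only [Nat.succ_eq_add_one, Nat.add_sub_cancel, prod_pochRatio_eq]
  have hset : (Set.univ.pi fun _ : Fin (n + 1) => Set.Ioc (0 : ℝ) (2 * Real.pi)) =ᵐ[volume]
      Set.univ.pi fun _ => Set.Icc (0 : ℝ) (2 * Real.pi) :=
    Measure.univ_pi_Ioc_ae_eq_Icc.trans (Set.pi_univ_Icc _ _).symm.eventuallyEq
  have h := weightIntegral_value_of_norm_lt hq ht n
  rw [weightIntegral, cubeMeasure_eq] at h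
  rw [setIntegral_congr_set hset]
  have hf : ((n + 1).factorial : ℂ) ≠ 0 := Nat.cast_ne_zero.2 (Nat.factorial_ne_zero _)
  have hp : (2 * (Real.pi : ℂ)) ^ (n + 1) ≠ 0 := pow_ne_zero _ (by simp [Real.pi_ne_zero])
  have h2 : (2 : ℂ) ^ n ≠ 0 := pow_ne_zero _ two_ne_zero
  have ha : ap q t ^ (n + 1) ≠ 0 := pow_ne_zero _ (ap_ne_zero hq ht)
  rw [div_mul_div_comm, div_mul_div_comm, div_mul_eq_mul_div, mul_one, mul_one, h,
    div_eq_iff (mul_ne_zero (mul_ne_zero ha (mul_ne_zero h2 hf)) hp)]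
  ring
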